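/- arXiv:0812.5002 — 2 statements merged into one kernel-verified Lean document; each statement's English description precedes it below -/
import Mathlib

section
/- Let L be the centerless twisted N=2 superconformal algebra and V = L ⊗ L the L-module under the adjoint diagonal action. Then every super-derivation from L to V is inner: Der(L, V) = Inn(L, V), equivalently the first cohomology group H¹(L, V) = Der(L, V)/Inn(L, V) vanishes. -/
namespace N2

/-- Basis indices of the centerless twisted N=2 superconformal algebra:
`L m` is the Virasoro generator `L_m` (`m ∈ ℤ`),
`T k` is the Heisenberg generator `T_{k+1/2}` (`k ∈ ℤ`, index in `1/2 + ℤ`),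
`G n` is the fermionic generator `G_{n/2}` (`n ∈ ℤ`, index in `(1/2)ℤ`). -/
inductive Idx : Type
  | L : ℤ → Idx
  | T : ℤ → Idx
  | G : ℤ → Idx
  deriving DecidableEq

noncomputable section

/-- The centerless twisted N=2 superconformal algebra `𝓛`, as the free
complex vector space on the basis `{L_m, T_r, G_p}`. -/
abbrev Lsa : Type := Idx →₀ ℂ

/-- `𝓛 ⊗ 𝓛`, realized as the free complex vector space on pairs of basis indices. -/
abbrev V : Type := (Idx × Idx) →₀ ℂ

/-- `𝓛 ⊗ 𝓛 ⊗ 𝓛`. -/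
abbrev W : Type := (Idx × Idx × Idx) →₀ ℂ

/-- the basis vector indexed by `i`. -/
def e (i : Idx) : Lsa := Finsupp.single i 1

/-- the ℤ₂-parity of the basis elements: `L_m, T_r` are even, `G_p` is odd. -/
def par : Idx → ZMod 2
  | .L _ => 0
  | .T _ => 0
  | .G _ => 1

/-- the sign `(-1)^p` for `p ∈ ℤ₂`. -/
def sgn (p : ZMod 2) : ℂ := if p = 0 then 1 else -1

/-- the `(1/2)ℤ`-degree of a basis element, as a rational number:
`L_m ↦ m`, `T_{k+1/2} ↦ k + 1/2`, `G_{n/2} ↦ n/2`. -/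
def qdeg : Idx → ℚ
  | .L m => (m : ℚ)
  | .T k => (k : ℚ) + 1/2
  | .G n => (n : ℚ) / 2

/-- The super-bracket of `𝓛` on basis elements:
`[L_m, L_n] = (m-n) L_{m+n}`, `[L_m, T_r] = -r T_{r+m}`, `[T_r, T_s] = 0`,
`[L_m, G_p] = (m/2 - p) G_{p+m}`, `[T_r, G_p] = G_{p+r}`,
`[G_p, G_q] = (-1)^{2p} 2 L_{p+q}` if `p+q ∈ ℤ` and
`[G_p, G_q] = (-1)^{2p+1} (p-q) T_{p+q}` if `p+q ∈ 1/2+ℤ`,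
together with the super skew-symmetric counterparts. -/
def bk : Idx → Idx → Lsa
  | .L m, .L n => ((m : ℂ) - n) • e (.L (m + n))
  | .L m, .T k => (-((k : ℂ) + 1/2)) • e (.T (k + m))
  | .L m, .G n => (((m : ℂ) - n) / 2) • e (.G (n + 2*m))
  | .T k, .L m => ((k : ℂ) + 1/2) • e (.T (k + m))
  | .T _, .T _ => 0
  | .T k, .G n => e (.G (n + 2*k + 1))
  | .G n, .L m => (-((m : ℂ) - n) / 2) • e (.G (n + 2*m))
  | .G n, .T k => - e (.G (n + 2*k + 1))
  | .G n, .G n' =>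
      if (n + n') % 2 = 0 then
        ((-1 : ℂ) ^ n * 2) • e (.L ((n + n') / 2))
      else
        ((-1 : ℂ) ^ (n + 1) * (((n : ℂ) - n') / 2)) • e (.T ((n + n' - 1) / 2))

/-- the bracket of `𝓛`, extended bilinearly to all of `𝓛`. -/
def br (x y : Lsa) : Lsa :=
  x.sum fun i a => y.sum fun j b => (a * b) • bk i j

/-- the adjoint diagonal action of `𝓛` on `𝓛 ⊗ 𝓛`:
`x ∗ (a ⊗ b) = [x,a] ⊗ b + (-1)^{[x][a]} a ⊗ [x,b]`. -/
def act2 (x : Lsa) (v : V) : V :=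
  x.sum fun i a => v.sum fun p c =>
    (a * c) •
      (((bk i p.1).sum fun k t => Finsupp.single (k, p.2) t)
        + sgn (par i * par p.1) • ((bk i p.2).sum fun k t => Finsupp.single (p.1, k) t))

/-- the adjoint diagonal action of `𝓛` on `𝓛 ⊗ 𝓛 ⊗ 𝓛`. -/
def act3 (x : Lsa) (w : W) : W :=
  x.sum fun i a => w.sum fun p c =>
    (a * c) •
      (((bk i p.1).sum fun k t => Finsupp.single (k, p.2.1, p.2.2) t)
        + sgn (par i * par p.1) •
            ((bk i p.2.1).sum fun k t => Finsupp.single (p.1, k, p.2.2) t)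
        + sgn (par i * (par p.1 + par p.2.1)) •
            ((bk i p.2.2).sum fun k t => Finsupp.single (p.1, p.2.1, k) t))

/-- the adjoint diagonal action of `𝓛` on the `n`-fold tensor power `𝓛^{⊗n}`,
realized as the free complex vector space on `n`-tuples of basis indices:
`x ∗ (a₁ ⊗ ⋯ ⊗ aₙ) = Σ_k (-1)^{[x]([a₁]+⋯+[a_{k-1}])} a₁ ⊗ ⋯ ⊗ [x,a_k] ⊗ ⋯ ⊗ aₙ`. -/
def actN (n : ℕ) (x : Lsa) (v : (Fin n → Idx) →₀ ℂ) : (Fin n → Idx) →₀ ℂ :=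
  x.sum fun i a => v.sum fun f c =>
    (a * c) •
      (Finset.univ.sum fun k : Fin n =>
        sgn (par i * ((Finset.univ.filter fun l => l < k).sum fun l => par (f l))) •
          ((bk i (f k)).sum fun j t => Finsupp.single (Function.update f k j) t))

/-- the super-twist map `τ : 𝓛 ⊗ 𝓛 → 𝓛 ⊗ 𝓛`, `τ(x ⊗ y) = (-1)^{[x][y]} y ⊗ x`. -/
def tau (v : V) : V :=
  v.sum fun p c => (sgn (par p.1 * par p.2) * c) • Finsupp.single (p.2, p.1) 1

/-- the image `Im(1⊗1 - τ) ⊂ 𝓛 ⊗ 𝓛`. -/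
def ImOneSubTau : Set V := Set.range fun v : V => v - tau v

/-- the super-cyclic map `ξ` on `𝓛 ⊗ 𝓛 ⊗ 𝓛`:
`ξ(x₁ ⊗ x₂ ⊗ x₃) = (-1)^{[x₁]([x₂]+[x₃])} x₂ ⊗ x₃ ⊗ x₁`. -/
def xi (w : W) : W :=
  w.sum fun p c =>
    (sgn (par p.1 * (par p.2.1 + par p.2.2)) * c) • Finsupp.single (p.2.1, p.2.2, p.1) 1

/-- `c(r) = [r¹², r¹³] + [r¹², r²³] + [r¹³, r²³] ∈ 𝓛 ⊗ 𝓛 ⊗ 𝓛` for `r ∈ 𝓛 ⊗ 𝓛`. -/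
def cYB (r : V) : W :=
  r.sum fun p a => r.sum fun q b =>
    (a * b) •
      (sgn (par q.1 * par p.2) •
          ((bk p.1 q.1).sum fun k t => Finsupp.single (k, p.2, q.2) t)
        + ((bk p.2 q.1).sum fun k t => Finsupp.single (p.1, k, q.2) t)
        + sgn (par q.1 * par p.2) •
            ((bk p.2 q.2).sum fun k t => Finsupp.single (p.1, q.1, k) t))

/-- `1 ⊗ D : 𝓛 ⊗ 𝓛 → 𝓛 ⊗ 𝓛 ⊗ 𝓛` for an even map `D : 𝓛 → 𝓛 ⊗ 𝓛`. -/
def oneTensorMap (D : Lsa → V) (v : V) : W :=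
  v.sum fun p c => c • ((D (e p.2)).sum fun q t => Finsupp.single (p.1, q.1, q.2) t)

/-- `r ∈ 𝓛 ⊗ 𝓛` is homogeneous of parity `ε ∈ ℤ₂`. -/
def IsParityV (ε : ZMod 2) (r : V) : Prop := ∀ p ∈ r.support, par p.1 + par p.2 = ε

/-- `r ∈ 𝓛 ⊗ 𝓛` is even (degree `0̄`). -/
def IsEvenV (r : V) : Prop := IsParityV 0 r

/-- `r` lies in the graded component `V_ι = Σ_{j+k=ι} 𝓛_j ⊗ 𝓛_k` of `V = 𝓛 ⊗ 𝓛`. -/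
def IsDegV (ι : ℚ) (r : V) : Prop := ∀ p ∈ r.support, qdeg p.1 + qdeg p.2 = ι

/-- the linear map `𝓛 → M` with the prescribed values on the basis. -/
def ofBasis {M : Type*} [AddCommMonoid M] [Module ℂ M] (g : Idx → M) : Lsa →ₗ[ℂ] M :=
  Finsupp.lsum ℂ fun i => LinearMap.toSpanSingleton ℂ M (g i)

/-- the inner super-derivation `a_inn` attached to `a ∈ 𝓛 ⊗ 𝓛` of parity `ε`:
`a_inn(x) = (-1)^{[a][x]} x ∗ a` for homogeneous `x`, extended linearly. -/
def innMap (ε : ZMod 2) (a : V) : Lsa →ₗ[ℂ] V :=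
  ofBasis fun i => sgn (ε * par i) • act2 (e i) a

/-- `d : 𝓛 → 𝓛 ⊗ 𝓛` is a super-derivation of parity `ε`:
`d(𝓛_ī) ⊆ V_{ī+ε}` and
`d([x,y]) = (-1)^{[d][x]} x ∗ d(y) - (-1)^{[y]([d]+[x])} y ∗ d(x)`
for homogeneous `x, y` (stated on basis elements and extended bilinearly). -/
def IsDerOfParity (ε : ZMod 2) (d : Lsa →ₗ[ℂ] V) : Prop :=
  (∀ i : Idx, IsParityV (par i + ε) (d (e i))) ∧
  (∀ i j : Idx,
    d (bk i j)
      = sgn (ε * par i) • act2 (e i) (d (e j))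
        - sgn (par j * (ε + par i)) • act2 (e j) (d (e i)))

/-- `d` is homogeneous of degree `ι ∈ (1/2)ℤ` with respect to the `(1/2)ℤ`-grading:
`d(𝓛_j) ⊆ V_{ι+j}`. -/
def IsDegHomogDer (ι : ℚ) (d : Lsa →ₗ[ℂ] V) : Prop :=
  ∀ i : Idx, IsDegV (ι + qdeg i) (d (e i))

/-- `D : 𝓛 → 𝓛 ⊗ 𝓛` defines a Lie super-bialgebra structure on `𝓛`: it is linear,
`D(𝓛_ī) ⊆ Σ_j 𝓛_j̄ ⊗ 𝓛_{ī-j̄}`, `Im D ⊆ Im(1⊗1-τ)`,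
`(1⊗1⊗1 + ξ + ξ²)(1 ⊗ D)D = 0`, and
`D([x,y]) = x ∗ D(y) - (-1)^{[x][y]} y ∗ D(x)`. -/
structure IsLieSuperBialgebraDelta (D : Lsa → V) : Prop where
  linear : IsLinearMap ℂ D
  parity : ∀ i : Idx, IsParityV (par i) (D (e i))
  skewIm : ∀ x : Lsa, D x ∈ ImOneSubTau
  coJacobi : ∀ x : Lsa,
    oneTensorMap D (D x) + xi (oneTensorMap D (D x)) + xi (xi (oneTensorMap D (D x))) = 0
  cocycle : ∀ i j : Idx,
    D (bk i j) = act2 (e i) (D (e j)) - sgn (par i * par j) • act2 (e j) (D (e i))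

/-! ### The adjoint action as linear maps -/

theorem bk_even_even (m n : ℤ) : bk (.G (2*m)) (.G (2*n)) = (2:ℂ) • e (.L (m+n)) := by
  have h1 : (2*m+2*n) % 2 = 0 := by omega
  have h2 : (2*m+2*n) / 2 = m+n := by omega
  have h3 : (-1:ℂ)^(2*m) = 1 := Even.neg_one_zpow (even_two_mul m)
  simp only [bk, h1, h2, h3, if_true, one_mul]

theorem bk_odd_odd (m n : ℤ) :
    bk (.G (2*m+1)) (.G (2*n+1)) = (-2:ℂ) • e (.L (m+n+1)) := by
  have h1 : (2*m+1+(2*n+1)) % 2 = 0 := by omega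
  have h2 : (2*m+1+(2*n+1)) / 2 = m+n+1 := by omega
  have h3 : (-1:ℂ)^(2*m+1) = -1 := Odd.neg_one_zpow (odd_two_mul_add_one m)
  simp only [bk, h1, h2, h3, if_true]
  norm_num

theorem bk_even_odd (m n : ℤ) :
    bk (.G (2*m)) (.G (2*n+1)) = (-((m:ℂ)-n-1/2)) • e (.T (m+n)) := by
  have h1 : ¬ (2*m+(2*n+1)) % 2 = 0 := by omega
  have h2 : (2*m+(2*n+1)-1) / 2 = m+n := by omega
  have h3 : (-1:ℂ)^(2*m+1) = -1 := Odd.neg_one_zpow (odd_two_mul_add_one m)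
  simp only [bk, h1, h2, h3, if_false]
  push_cast
  congr 1; ring

theorem bk_odd_even (m n : ℤ) :
    bk (.G (2*m+1)) (.G (2*n)) = ((m:ℂ)-n+1/2) • e (.T (m+n)) := by
  have h1 : ¬ (2*m+1+2*n) % 2 = 0 := by omega
  have h2 : (2*m+1+2*n-1) / 2 = m+n := by omega
  have h3 : (-1:ℂ)^(2*m+1+1) = 1 := Even.neg_one_zpow ⟨m+1, by ring⟩
  simp only [bk, h1, h2, h3, if_false]
  push_cast
  congr 1; ring

theorem bk_LL (m n : ℤ) : bk (.L m) (.L n) = ((m : ℂ) - n) • e (.L (m + n)) := rfl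
theorem bk_LT (m k : ℤ) : bk (.L m) (.T k) = (-((k : ℂ) + 1/2)) • e (.T (k + m)) := rfl
theorem bk_LG (m n : ℤ) : bk (.L m) (.G n) = (((m : ℂ) - n) / 2) • e (.G (n + 2*m)) := rfl
theorem bk_TL (k m : ℤ) : bk (.T k) (.L m) = ((k : ℂ) + 1/2) • e (.T (k + m)) := rfl
theorem bk_TT (k l : ℤ) : bk (.T k) (.T l) = 0 := rfl
theorem bk_TG (k n : ℤ) : bk (.T k) (.G n) = e (.G (n + 2*k + 1)) := rfl
theorem bk_GL (n m : ℤ) : bk (.G n) (.L m) = (-((m : ℂ) - n) / 2) • e (.G (n + 2*m)) := rfl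
theorem bk_GT (n k : ℤ) : bk (.G n) (.T k) = - e (.G (n + 2*k + 1)) := rfl

/-- doubled integer degree -/
def dg : Idx → ℤ
  | .L m => 2*m
  | .T k => 2*k+1
  | .G n => n

/-- the unique basis index mapped by `ad i` to a multiple of `p` -/
def pre : Idx → Idx → Idx
  | .L m, .L n => .L (n-m)
  | .L m, .T k => .T (k-m)
  | .L m, .G n => .G (n-2*m)
  | .T _, .L m => .L m
  | .T k, .T j => .L (j-k)
  | .T k, .G n => .G (n-2*k-1)
  | .G n, .L m => .G (2*m-n)
  | .G n, .T k => .G (2*k+1-n)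
  | .G n, .G n' => if (n'-n) % 2 = 0 then .L ((n'-n)/2) else .T ((n'-n-1)/2)

/-- the corresponding coefficient -/
def cf : Idx → Idx → ℂ
  | .L m, .L n => 2*m-n
  | .L m, .T k => -(k-m+1/2)
  | .L m, .G n => (3*m-n)/2
  | .T _, .L _ => 0
  | .T k, .T _ => k+1/2
  | .T _, .G _ => 1
  | .G n, .L _ => if n % 2 = 0 then 2 else -2
  | .G n, .T k => if n % 2 = 0 then -(n-k-1/2) else (n-k-1/2)
  | .G n, .G n' => if (n'-n) % 2 = 0 then -((n'-n)/2-n)/2 else -1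

theorem smul_e_apply (c : ℂ) (x y : Idx) : (c • e x) y = if x = y then c else 0 := by
  simp [e, Finsupp.single_apply]

theorem e_apply (x y : Idx) : (e x) y = if x = y then 1 else 0 := by
  simp [e, Finsupp.single_apply]

theorem bk_apply_L (m : ℤ) (a p : Idx) :
    bk (.L m) a p = if a = pre (.L m) p then cf (.L m) p else 0 := by
  rcases a with x|x|x <;> rcases p with y|y|y <;>
  simp only [bk_LL, bk_LT, bk_LG, pre, cf, smul_e_apply, Idx.L.injEq, Idx.T.injEq,
    Idx.G.injEq, reduceCtorEq, if_false]
  · by_cases h : m + x = y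
    · subst h; simp; ring
    · rw [if_neg h, if_neg (by omega)]
  · by_cases h : x + m = y
    · subst h; simp
    · rw [if_neg h, if_neg (by omega)]
  · by_cases h : x + 2*m = y
    · subst h; simp; ring
    · rw [if_neg h, if_neg (by omega)]

theorem bk_apply_T (m : ℤ) (a p : Idx) :
    bk (.T m) a p = if a = pre (.T m) p then cf (.T m) p else 0 := by
  rcases a with x|x|x <;> rcases p with y|y|y <;>
  simp only [bk_TL, bk_TT, bk_TG, pre, cf, smul_e_apply, e_apply, Idx.L.injEq, Idx.T.injEq,
    Idx.G.injEq, reduceCtorEq, if_false, ite_self, Finsupp.coe_zero, Pi.zero_apply]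
  · by_cases h : m + x = y
    · subst h; simp
    · rw [if_neg h, if_neg (by omega)]
  · by_cases h : x + 2*m + 1 = y
    · subst h; rw [if_pos rfl, if_pos (by ring)]
    · rw [if_neg h, if_neg (by omega)]

theorem bk_apply_G (n : ℤ) (a p : Idx) :
    bk (.G n) a p = if a = pre (.G n) p then cf (.G n) p else 0 := by
  rcases a with x|x|x
  · rcases p with y|y|y
    · simp [bk_GL, pre, smul_e_apply]
    · simp [bk_GL, pre, smul_e_apply]
    by_cases h : n + 2*x = y
    · subst h
      have h1 : (n + 2*x - n) % 2 = 0 := by omega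
      have h2 : (n + 2*x - n) / 2 = x := by omega
      have h3 : Idx.L x = pre (.G n) (.G (n+2*x)) := by simp only [pre, h1, h2, if_true]
      rw [if_pos h3]
      simp only [bk_GL, smul_e_apply, cf, h1, if_true]
      push_cast; ring
    · have h3 : Idx.L x ≠ pre (.G n) (.G y) := by
        simp only [pre]; split_ifs
        · simp; omega
        · simp
      rw [if_neg h3, bk_GL, smul_e_apply, if_neg (by simpa using h)]
  · rcases p with y|y|y
    · simp [bk_GT, pre, e_apply]
    · simp [bk_GT, pre, e_apply]
    by_cases h : n + 2*x + 1 = y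
    · subst h
      have h1 : ¬ (n + 2*x + 1 - n) % 2 = 0 := by omega
      have h2 : (n + 2*x + 1 - n - 1) / 2 = x := by omega
      have h3 : Idx.T x = pre (.G n) (.G (n+2*x+1)) := by simp only [pre, h1, h2, if_false]
      rw [if_pos h3]
      simp only [bk_GT, Finsupp.neg_apply, e_apply, cf, h1, if_true, if_false]
    · have h3 : Idx.T x ≠ pre (.G n) (.G y) := by
        simp only [pre]; split_ifs
        · simp
        · simp; omega
      rw [if_neg h3, bk_GT, Finsupp.neg_apply, e_apply, if_neg (by simpa using h), neg_zero]
  · have hp : ∀ y, ¬ (Idx.G x = pre (.G n) (.G y)) := by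
      intro y; simp only [pre]; split_ifs <;> simp
    rcases Int.even_or_odd' n with ⟨u, rfl|rfl⟩ <;> rcases Int.even_or_odd' x with ⟨v, rfl|rfl⟩ <;>
    simp only [bk_even_even, bk_even_odd, bk_odd_even, bk_odd_odd, smul_e_apply] <;>
    rcases p with y|y|y <;> (try rw [if_neg (hp y)]) <;>
    simp only [pre, cf, Idx.L.injEq, Idx.T.injEq, Idx.G.injEq, reduceCtorEq, if_false]
    · by_cases h : u + v = y
      · subst h; rw [if_pos rfl, if_pos (by ring), if_pos (by omega)]
      · rw [if_neg h, if_neg (by omega)]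
    · rw [if_neg (by omega)]
    · rw [if_neg (by omega)]
    · by_cases h : u + v = y
      · subst h; rw [if_pos rfl, if_pos (by ring), if_pos (by omega)]; push_cast; ring
      · rw [if_neg h, if_neg (by omega)]
    · rw [if_neg (by omega)]
    · by_cases h : u + v = y
      · subst h; rw [if_pos rfl, if_pos (by ring), if_neg (by omega)]; push_cast; ring
      · rw [if_neg h, if_neg (by omega)]
    · by_cases h : u + v + 1 = y
      · subst h; rw [if_pos rfl, if_pos (by ring), if_neg (by omega)]
      · rw [if_neg h, if_neg (by omega)]
    · rw [if_neg (by omega)]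

theorem bk_apply (i a p : Idx) : bk i a p = if a = pre i p then cf i p else 0 := by
  rcases i with m|m|m
  exacts [bk_apply_L m a p, bk_apply_T m a p, bk_apply_G m a p]

theorem dg_pre (i p : Idx) (h : cf i p ≠ 0) : dg p = dg i + dg (pre i p) := by
  rcases i with m|m|m <;> rcases p with y|y|y <;> simp only [pre, dg] at * <;>
    (try split_ifs) <;> (try simp only [dg]) <;> (try omega)
  exact absurd rfl h

theorem par_pre (i p : Idx) (h : cf i p ≠ 0) : par p = par i + par (pre i p) := by
  rcases i with m|m|m <;> rcases p with y|y|y <;> simp only [pre, par] at * <;>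
    (try split_ifs) <;> (try simp only [par]) <;> (try decide)

theorem sgn_add (a b : ZMod 2) : sgn (a+b) = sgn a * sgn b := by
  have : ∀ a b : ZMod 2, (a = 0 ∧ b = 0) ∨ (a = 1 ∧ b = 0) ∨ (a = 0 ∧ b = 1) ∨ (a = 1 ∧ b = 1) := by
    decide
  have h2 : (1 + 1 : ZMod 2) = 0 := by decide
  rcases this a b with h|h|h|h <;> simp [sgn, h.1, h.2, h2]

theorem sgn_zero : sgn 0 = 1 := by simp [sgn]
theorem sgn_one : sgn 1 = -1 := by simp [sgn]
theorem sgn_mul_self (a : ZMod 2) : sgn a * sgn a = 1 := by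
  simp only [sgn]; split_ifs <;> norm_num

/-! ### Linear versions -/

def ad (i : Idx) : Lsa →ₗ[ℂ] Lsa := Finsupp.linearCombination ℂ (bk i)

def sg (i : Idx) : Lsa →ₗ[ℂ] Lsa := Finsupp.linearCombination ℂ (fun a => sgn (par i * par a) • e a)

def tens : Lsa →ₗ[ℂ] Lsa →ₗ[ℂ] V :=
  Finsupp.linearCombination ℂ (fun a => Finsupp.lmapDomain ℂ ℂ (Prod.mk a))

def act (i : Idx) : V →ₗ[ℂ] V :=
  Finsupp.linearCombination ℂ (fun p : Idx × Idx =>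
    tens (bk i p.1) (e p.2) + sgn (par i * par p.1) • tens (e p.1) (bk i p.2))

theorem ad_e (i a : Idx) : ad i (e a) = bk i a := by simp [ad, e]
theorem sg_e (i a : Idx) : sg i (e a) = sgn (par i * par a) • e a := by simp [sg, e]
theorem tens_e_left (a : Idx) (y : Lsa) : tens (e a) y = Finsupp.mapDomain (Prod.mk a) y := by
  simp [tens, e]
theorem tens_e_right (x : Lsa) (b : Idx) : tens x (e b) = Finsupp.mapDomain (fun k => (k, b)) x := by
  induction x using Finsupp.induction_linear with
  | zero => simp
  | add f g hf hg => simp [hf, hg, Finsupp.mapDomain_add]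
  | single a c => simp [tens, e, Finsupp.mapDomain_single]
theorem tens_e_e (a b : Idx) : tens (e a) (e b) = Finsupp.single (a,b) 1 := by
  rw [tens_e_left]; simp [e]

theorem act_single (i a b : Idx) : act i (Finsupp.single (a,b) 1) =
    tens (bk i a) (e b) + sgn (par i * par a) • tens (e a) (bk i b) := by simp [act]

theorem act2_e (i : Idx) (v : V) : act2 (e i) v = act i v := by
  unfold act2 act
  rw [e, Finsupp.sum_single_index (by simp), Finsupp.linearCombination_apply]
  apply Finsupp.sum_congr
  intro p _
  rw [one_mul, tens_e_left, tens_e_right]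
  rfl

theorem e_ext {M : Type*} [AddCommMonoid M] [Module ℂ M] {f g : Lsa →ₗ[ℂ] M}
    (h : ∀ a, f (e a) = g (e a)) : f = g := by
  ext a; exact h a

theorem v_ext {M : Type*} [AddCommMonoid M] [Module ℂ M] {f g : V →ₗ[ℂ] M}
    (h : ∀ a b, f (tens (e a) (e b)) = g (tens (e a) (e b))) : f = g := by
  ext ⟨a, b⟩; simpa [tens_e_e] using h a b

theorem act_tens (i : Idx) (x y : Lsa) :
    act i (tens x y) = tens (ad i x) y + tens (sg i x) (ad i y) := by
  have : tens.compr₂ (act i) = tens.comp (ad i) + (tens.comp (sg i)).compl₂ (ad i) := by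
    apply e_ext; intro a; apply e_ext; intro b
    simp [tens_e_e, act_single, ad_e, sg_e]
  exact congrArg (fun f => f x y) this

theorem act_apply (i : Idx) (v : V) (p q : Idx) :
    act i v (p,q) = cf i p * v (pre i p, q) + sgn (par i * par p) * (cf i q * v (p, pre i q)) := by
  induction v using Finsupp.induction_linear with
  | zero => simp
  | add f g hf hg => simp only [map_add, Finsupp.add_apply, hf, hg]; ring
  | single ab c =>
    obtain ⟨a, b⟩ := ab
    have h1 : Finsupp.single (a,b) c = c • (Finsupp.single (a,b) 1 : V) := by simp
    have hl : ∀ x : Lsa, (tens x (e b)) (p,q) = if q = b then x p else 0 := by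
      intro x
      rw [tens_e_right]
      split_ifs with h
      · subst h
        exact Finsupp.mapDomain_apply (fun _ _ h => (Prod.mk.inj h).1) x p
      · exact Finsupp.mapDomain_of_notMem_range _ _ (by rintro ⟨k, hk⟩; exact h (Prod.mk.inj hk).2.symm)
    have hr : ∀ x : Lsa, (tens (e a) x) (p,q) = if p = a then x q else 0 := by
      intro x
      rw [tens_e_left]
      split_ifs with h
      · subst h
        exact Finsupp.mapDomain_apply (fun _ _ h => (Prod.mk.inj h).2) x q
      · exact Finsupp.mapDomain_of_notMem_range _ _ (by rintro ⟨k, hk⟩; exact h (Prod.mk.inj hk).1.symm)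
    rw [h1, map_smul, act_single]
    simp only [Finsupp.smul_apply, Finsupp.add_apply, hl, hr, bk_apply, Finsupp.single_apply,
      Prod.mk.injEq, smul_eq_mul]
    have A : (if q = b then (if a = pre i p then cf i p else 0) else 0) =
        cf i p * (if a = pre i p ∧ b = q then 1 else 0) := by
      split_ifs <;> first | ring1 | (exfalso; tauto) | (exfalso; simp_all; done)
    have B : sgn (par i * par a) * (if p = a then (if b = pre i q then cf i q else 0) else 0) =
        sgn (par i * par p) * (cf i q * (if a = p ∧ b = pre i q then 1 else 0)) := by
      by_cases h : p = a
      · subst h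
        split_ifs <;> first | ring1 | (exfalso; tauto) | (exfalso; simp_all; done)
      · rw [if_neg h, if_neg (fun h' => h h'.1.symm)]; ring
    linear_combination c * A + c * B

theorem act_parity (i : Idx) (ε : ZMod 2) (v : V) (hv : IsParityV ε v) :
    IsParityV (par i + ε) (act i v) := by
  rintro ⟨p, q⟩ h
  rw [Finsupp.mem_support_iff, act_apply] at h
  by_contra hc
  apply h
  have h1 : cf i p * v (pre i p, q) = 0 := by
    by_contra h1
    have h2 := par_pre i p (left_ne_zero_of_mul h1)
    have h3 := hv _ (Finsupp.mem_support_iff.2 (right_ne_zero_of_mul h1))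
    apply hc; simp only at *; rw [h2, ← h3]; ring
  have h2 : cf i q * v (p, pre i q) = 0 := by
    by_contra h1
    have h2 := par_pre i q (left_ne_zero_of_mul h1)
    have h3 := hv _ (Finsupp.mem_support_iff.2 (right_ne_zero_of_mul h1))
    apply hc; simp only at *; rw [h2, ← h3]; ring
  rw [h1, h2]; simp

/-- `v` is concentrated in (doubled) degree `n`. -/
def HasDg (n : ℤ) (v : V) : Prop := ∀ p q, v (p,q) ≠ 0 → dg p + dg q = n

theorem act_dg (i : Idx) (n : ℤ) (v : V) (hv : HasDg n v) : HasDg (dg i + n) (act i v) := by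
  intro p q h
  rw [act_apply] at h
  by_contra hc
  apply h
  have h1 : cf i p * v (pre i p, q) = 0 := by
    by_contra h1
    have h2 := dg_pre i p (left_ne_zero_of_mul h1)
    have h3 := hv _ _ (right_ne_zero_of_mul h1)
    omega
  have h2 : cf i q * v (p, pre i q) = 0 := by
    by_contra h1
    have h2 := dg_pre i q (left_ne_zero_of_mul h1)
    have h3 := hv _ _ (right_ne_zero_of_mul h1)
    omega
  rw [h1, h2]; simp

/-- bk is parity homogeneous. -/
theorem bk_par (i j k : Idx) (h : bk i j k ≠ 0) : par k = par i + par j := by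
  rw [bk_apply] at h
  split_ifs at h with h1
  · rw [h1]; exact par_pre i k h
  · exact absurd rfl h

theorem sg_bk (l i j : Idx) :
    sg l (bk i j) = sgn (par l * (par i + par j)) • bk i j := by
  rw [sg, Finsupp.linearCombination_apply]
  have : bk i j = (bk i j).sum (fun k c => c • e k) := by
    conv_lhs => rw [← Finsupp.sum_single (bk i j)]
    apply Finsupp.sum_congr; intro k _; simp [e]
  conv_rhs => rw [this, Finsupp.smul_sum]
  apply Finsupp.sum_congr
  intro k hk
  rw [bk_par i j k (Finsupp.mem_support_iff.1 hk), smul_comm]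

/-- the adjoint action of a general element -/
def adx : Lsa →ₗ[ℂ] Lsa →ₗ[ℂ] Lsa := Finsupp.linearCombination ℂ ad
def actx : Lsa →ₗ[ℂ] V →ₗ[ℂ] V := Finsupp.linearCombination ℂ act
theorem adx_e (i : Idx) : adx (e i) = ad i := by simp [adx, e]
theorem actx_e (i : Idx) : actx (e i) = act i := by simp [actx, e]

set_option maxHeartbeats 1000000 in
theorem jacobi (i j k : Idx) :
    adx (bk i j) (e k) = ad i (bk j k) - sgn (par i * par j) • ad j (bk i k) := by
  have hG : ∀ (P : Idx → Prop), (∀ m, P (.L m)) → (∀ m, P (.T m)) → (∀ m, P (.G (2*m))) →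
      (∀ m, P (.G (2*m+1))) → ∀ i, P i := by
    intro P h1 h2 h3 h4 i
    rcases i with m|m|m
    · exact h1 m
    · exact h2 m
    · rcases Int.even_or_odd' m with ⟨u, rfl|rfl⟩
      · exact h3 u
      · exact h4 u
  have o1 : ∀ a b : ℤ, 2*a+1+2*b = 2*(a+b)+1 := by intros; ring
  have o2 : ∀ a b : ℤ, 2*a+2*b = 2*(a+b) := by intros; ring
  have o3 : ∀ a : ℤ, 2*a+1+1 = 2*(a+1) := by intros; ring
  induction i using hG with | _ a
  all_goals induction j using hG with | _ b
  all_goals induction k using hG with | _ c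
  all_goals
    simp only [bk_LL, bk_LT, bk_LG, bk_TL, bk_TT, bk_TG, bk_GL, bk_GT, bk_even_even, bk_even_odd,
      bk_odd_even, bk_odd_odd, map_smul, map_neg, map_zero, adx_e, ad_e, LinearMap.smul_apply,
      LinearMap.neg_apply, LinearMap.zero_apply,
      o1, o2, o3, par, mul_zero, zero_mul, mul_one, sgn_zero, sgn_one]
  all_goals push_cast
  all_goals try ring_nf
  all_goals try module

/-! ### Inner derivations -/

theorem bk_hom {M : Type*} [AddCommMonoid M] [Module ℂ M] (i j : Idx) (f g : Lsa →ₗ[ℂ] M)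
    (h : ∀ k, par k = par i + par j → f (e k) = g (e k)) : f (bk i j) = g (bk i j) := by
  have : bk i j = (bk i j).sum (fun k c => c • e k) := by
    conv_lhs => rw [← Finsupp.sum_single (bk i j)]
    apply Finsupp.sum_congr; intro k _; simp [e]
  rw [this, map_finsuppSum, map_finsuppSum]
  apply Finsupp.sum_congr
  intro k hk
  rw [map_smul, map_smul, h k (bk_par i j k (Finsupp.mem_support_iff.1 hk))]

theorem actx_bk (i j : Idx) (v : V) :
    actx (bk i j) v = act i (act j v) - sgn (par i * par j) • act j (act i v) := by
  have : actx (bk i j) = act i ∘ₗ act j - sgn (par i * par j) • act j ∘ₗ act i := by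
    apply v_ext
    intro a b
    have h1 : actx (bk i j) (tens (e a) (e b)) = tens (adx (bk i j) (e a)) (e b)
        + sgn ((par i + par j) * par a) • tens (e a) (adx (bk i j) (e b)) := by
      apply bk_hom i j (actx.flip (tens (e a) (e b)))
        ((tens.flip (e b)) ∘ₗ (adx.flip (e a))
          + sgn ((par i + par j) * par a) • (tens (e a)) ∘ₗ (adx.flip (e b)))
      intro k hk
      simp [actx_e, adx_e, act_tens, sg_e, hk]
    rw [h1]
    simp only [LinearMap.sub_apply, LinearMap.smul_apply, LinearMap.comp_apply, act_tens, map_add,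
      ad_e, sg_e, jacobi, map_smul, map_sub, LinearMap.add_apply, sg_bk]
    simp only [add_mul, mul_add, sgn_add, smul_add, smul_sub, smul_smul]
    rw [mul_comm (par j) (par i)]
    have e1 := sgn_mul_self (par i * par j)
    match_scalars
    all_goals first | ring1 | linear_combination (-sgn (par j * par a)) * e1 | linear_combination (-sgn (par i * par a)) * e1 | linear_combination (sgn (par j * par a)) * e1 | linear_combination (sgn (par i * par a)) * e1
  rw [this]; rfl

theorem innMap_e (ε : ZMod 2) (a : V) (i : Idx) :
    innMap ε a (e i) = sgn (ε * par i) • act i a := by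
  simp [innMap, ofBasis, e, ← act2_e]

theorem innMap_der (ε : ZMod 2) (a : V) (ha : IsParityV ε a) : IsDerOfParity ε (innMap ε a) := by
  constructor
  · intro i p hp
    rw [innMap_e] at hp
    exact act_parity i ε a ha p (Finsupp.support_smul hp)
  · intro i j
    have h : innMap ε a (bk i j) = sgn (ε * (par i + par j)) • actx (bk i j) a := by
      apply bk_hom i j (innMap ε a) (sgn (ε * (par i + par j)) • actx.flip a)
      intro k hk
      simp [innMap_e, hk, actx_e]
    rw [h, actx_bk, act2_e, act2_e, innMap_e, innMap_e, map_smul, map_smul, mul_add, sgn_add,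
      mul_add, sgn_add, mul_comm (par j) ε, mul_comm (par j) (par i)]
    module

theorem sub_parity {ε : ZMod 2} {u v : V} (hu : IsParityV ε u) (hv : IsParityV ε v) :
    IsParityV ε (u - v) := by
  intro p hp
  have := Finsupp.support_sub hp
  rcases Finset.mem_union.1 this with h | h
  exacts [hu p h, hv p h]

theorem add_parity {ε : ZMod 2} {u v : V} (hu : IsParityV ε u) (hv : IsParityV ε v) :
    IsParityV ε (u + v) := by
  intro p hp
  have := Finsupp.support_add hp
  rcases Finset.mem_union.1 this with h | h
  exacts [hu p h, hv p h]

theorem smul_parity {ε : ZMod 2} {u : V} (c : ℂ) (hu : IsParityV ε u) :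
    IsParityV ε (c • u) := fun p hp => hu p (Finsupp.support_smul hp)

theorem zero_parity (ε : ZMod 2) : IsParityV ε (0 : V) := by intro p hp; simp at hp

theorem single_parity (p : Idx × Idx) (c : ℂ) : IsParityV (par p.1 + par p.2) (Finsupp.single p c) := by
  intro q hq
  rw [Finset.mem_singleton.1 (Finsupp.support_single_subset hq)]

/-- induction on vectors of given parity -/
theorem parity_induction {ε : ZMod 2} {P : V → Prop} (h0 : P 0)
    (hadd : ∀ u v, P u → P v → P (u + v))
    (hs : ∀ (a b : Idx) (c : ℂ), par a + par b = ε → P (Finsupp.single (a,b) c))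
    (v : V) (hv : IsParityV ε v) : P v := by
  rw [← Finsupp.sum_single v, Finsupp.sum]
  apply Finset.sum_induction _ P hadd h0
  rintro ⟨a, b⟩ hx
  exact hs a b _ (hv _ hx)

theorem der_sub {ε : ZMod 2} {d d' : Lsa →ₗ[ℂ] V} (h : IsDerOfParity ε d)
    (h' : IsDerOfParity ε d') : IsDerOfParity ε (d - d') := by
  constructor
  · intro i; exact sub_parity (h.1 i) (h'.1 i)
  · intro i j
    simp only [LinearMap.sub_apply, h.2 i j, h'.2 i j, act2_e, map_sub]
    module

theorem innMap_add (ε : ZMod 2) (a b : V) : innMap ε (a + b) = innMap ε a + innMap ε b := by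
  apply e_ext; intro i; simp [innMap_e]

/-- It suffices to modify by an inner derivation. -/
theorem inner_of_sub {ε : ZMod 2} {d : Lsa →ₗ[ℂ] V} (b : V) (hb : IsParityV ε b)
    (h : ∃ a : V, IsParityV ε a ∧ d - innMap ε b = innMap ε a) :
    ∃ a : V, IsParityV ε a ∧ d = innMap ε a := by
  obtain ⟨a, ha, h⟩ := h
  exact ⟨a + b, add_parity ha hb, by
    apply e_ext
    intro i
    have h1 := LinearMap.congr_fun h (e i)
    rw [LinearMap.sub_apply] at h1
    rw [innMap_add, LinearMap.add_apply, ← h1, sub_add_cancel]⟩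

theorem inner_zero {ε : ZMod 2} {d : Lsa →ₗ[ℂ] V} (h : ∀ i, d (e i) = 0) :
    ∃ a : V, IsParityV ε a ∧ d = innMap ε a :=
  ⟨0, zero_parity ε, e_ext fun i => by simp [h, innMap_e]⟩

theorem coef_zero_of_parity {ε : ZMod 2} {v : V} (hv : IsParityV ε v) (p q : Idx)
    (h : par p + par q ≠ ε) : v (p,q) = 0 := by
  by_contra hc
  exact h (hv (p,q) (Finsupp.mem_support_iff.2 hc))

/-! ### finitely supported sequences -/

theorem rec2_zero (u : ℤ → ℂ) (N : ℤ) (hN : ∀ n < N, u n = 0) (α β : ℂ)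
    (h : ∀ n, u (n+1) = α * u n + β * u (n-1)) (n : ℤ) : u n = 0 := by
  have key : ∀ k : ℕ, u (N + k - 1) = 0 ∧ u (N + k - 2) = 0 := by
    intro k
    induction k with
    | zero => exact ⟨hN _ (by simp), hN _ (by simp)⟩
    | succ k ih =>
      constructor
      · have := h (N+k-1)
        rw [ih.1, show N + (k:ℤ) - 1 - 1 = N+k-2 by ring, ih.2] at this
        rw [show N + ((k+1:ℕ):ℤ) - 1 = N+k-1+1 by push_cast; ring, this]; ring
      · rw [← ih.1]; congr 1; push_cast; ring
  by_cases hn : n < N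
  · exact hN n hn
  · have := (key (n - N + 1).toNat).1
    rwa [Int.toNat_of_nonneg (by omega), show N + (n - N + 1) - 1 = n by ring] at this

theorem fin_line (v : V) (f : ℤ → Idx × Idx) (hf : Function.Injective f) :
    (∃ N, ∀ n < N, v (f n) = 0) ∧ (∃ N, ∀ n > N, v (f n) = 0) := by
  have hfin : (f ⁻¹' (v.support : Set (Idx × Idx))).Finite :=
    Set.Finite.preimage hf.injOn v.support.finite_toSet
  obtain ⟨a, ha⟩ := hfin.bddBelow
  obtain ⟨b, hb⟩ := hfin.bddAbove
  constructor
  · refine ⟨a, fun n hn => ?_⟩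
    by_contra hc
    have := ha (show n ∈ f ⁻¹' (v.support : Set (Idx × Idx)) by simpa using hc)
    omega
  · refine ⟨b, fun n hn => ?_⟩
    by_contra hc
    have := hb (show n ∈ f ⁻¹' (v.support : Set (Idx × Idx)) by simpa using hc)
    omega

/-! ### The odd case -/

theorem T0_surj (v : V) (hv : IsParityV 1 v) : ∃ a : V, IsParityV 1 a ∧ act (.T 0) a = v := by
  refine parity_induction (P := fun v => ∃ a : V, IsParityV 1 a ∧ act (.T 0) a = v) ?_ ?_ ?_ v hv
  · exact ⟨0, zero_parity 1, by simp⟩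
  · rintro u v ⟨a, ha, rfl⟩ ⟨b, hb, rfl⟩
    exact ⟨a + b, add_parity ha hb, by simp⟩
  · intro p q c hpq
    have hs : ∀ x y : Idx, act (.T 0) (Finsupp.single (x,y) 1) =
      tens (bk (.T 0) x) (e y) + tens (e x) (bk (.T 0) y) := by
      intro x y; rw [act_single]; simp [par, sgn_zero]
    suffices h : ∃ a : V, IsParityV 1 a ∧ act (.T 0) a = Finsupp.single (p,q) 1 by
      obtain ⟨a, ha, h⟩ := h
      exact ⟨c • a, smul_parity c ha, by rw [map_smul, h]; simp⟩
    have par1 : ∀ x y : Idx, par x + par y = 1 → IsParityV 1 (Finsupp.single (x,y) (1:ℂ)) := by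
      intro x y h; rw [← h]; exact single_parity (x,y) 1
    rcases p with m|m|m <;> rcases q with n|n|n <;> simp only [par] at hpq <;>
      try (exfalso; revert hpq; decide)
    · refine ⟨Finsupp.single (.L m, .G (n-1)) 1 - (1/2:ℂ) • Finsupp.single (.T m, .G (n-2)) 1,
        sub_parity (par1 _ _ (by simp [par])) (smul_parity _ (par1 _ _ (by simp [par]))), ?_⟩
      rw [map_sub, map_smul, hs, hs]
      simp only [bk_TL, bk_TG, bk_TT, ← tens_e_e]
      rw [show n - 1 + 2*0 + 1 = n by ring, show n - 2 + 2*0 + 1 = n-1 by ring]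
      simp
    · refine ⟨Finsupp.single (.T m, .G (n-1)) 1, par1 _ _ (by simp [par]), ?_⟩
      rw [hs]
      simp only [bk_TG, bk_TT, ← tens_e_e]
      rw [show n - 1 + 2*0 + 1 = n by ring]
      simp
    · refine ⟨Finsupp.single (.G (m-1), .L n) 1 - (1/2:ℂ) • Finsupp.single (.G (m-2), .T n) 1,
        sub_parity (par1 _ _ (by simp [par])) (smul_parity _ (par1 _ _ (by simp [par]))), ?_⟩
      rw [map_sub, map_smul, hs, hs]
      simp only [bk_TL, bk_TG, bk_TT, ← tens_e_e]
      rw [show m - 1 + 2*0 + 1 = m by ring, show m - 2 + 2*0 + 1 = m-1 by ring]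
      simp
    · refine ⟨Finsupp.single (.G (m-1), .T n) 1, par1 _ _ (by simp [par]), ?_⟩
      rw [hs]
      simp only [bk_TG, bk_TT, ← tens_e_e]
      rw [show m - 1 + 2*0 + 1 = m by ring]
      simp

theorem T_apply (k : ℤ) (v : V) (p q : Idx) :
    act (.T k) v (p,q) = cf (.T k) p * v (pre (.T k) p, q) + cf (.T k) q * v (p, pre (.T k) q) := by
  rw [act_apply]; simp [par, sgn_zero]

theorem T0_inj (v : V) (hv : IsParityV 1 v) (h : act (.T 0) v = 0) : v = 0 := by
  have hc : ∀ p q, cf (.T 0) p * v (pre (.T 0) p, q) + cf (.T 0) q * v (p, pre (.T 0) q) = 0 := by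
    intro p q; rw [← T_apply, h]; rfl
  have hLG : ∀ m n, v (.L m, .G n) = 0 := by
    intro m n
    have := hc (.L m) (.G (n+1))
    simpa [cf, pre] using this
  have hGL : ∀ m n, v (.G n, .L m) = 0 := by
    intro m n
    have := hc (.G (n+1)) (.L m)
    simpa [cf, pre] using this
  have hTG : ∀ m n, v (.T m, .G n) = 0 := by
    intro m n
    have := hc (.T m) (.G (n+1))
    simpa [cf, pre, hLG] using this
  have hGT : ∀ m n, v (.G n, .T m) = 0 := by
    intro m n
    have := hc (.G (n+1)) (.T m)
    simpa [cf, pre, hGL] using this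
  ext ⟨p, q⟩
  rcases p with m|m|m <;> rcases q with n|n|n <;>
    first
    | exact hLG _ _ | exact hTG _ _ | exact hGL _ _ | exact hGT _ _
    | exact coef_zero_of_parity hv _ _ (by simp only [par]; decide)

theorem TT_inj (v : V) (hv : IsParityV 0 v) (h : act (.T (-1)) (act (.T 0) v) = v) : v = 0 := by
  have hc : ∀ p q, v (p,q) = act (.T (-1)) (act (.T 0) v) (p,q) := by intro p q; rw [h]
  have hLL : ∀ m n, v (.L m, .L n) = 0 := by
    intro m n; rw [hc, T_apply]; simp [cf]
  have hLT : ∀ m n, v (.L m, .T n) = 0 := by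
    intro m n; rw [hc]; simp [T_apply, cf, pre]
  have hTL : ∀ m n, v (.T m, .L n) = 0 := by
    intro m n; rw [hc]; simp [T_apply, cf, pre]
  have hTT : ∀ m n, v (.T m, .T n) = 0 := by
    intro m n; rw [hc]; simp [T_apply, cf, pre, hLL]
  have hGG : ∀ m n, v (.G m, .G n) = 0 := by
    intro m n
    have hinj : Function.Injective (fun k : ℤ => ((Idx.G (m+k), Idx.G (n-k)) : Idx × Idx)) := by
      intro a b hab; simp at hab; omega
    obtain ⟨⟨N, hN⟩, _⟩ := fin_line v _ hinj
    have := rec2_zero (fun k => v (.G (m+k), .G (n-k))) N hN (-1) (-1) (by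
      intro k
      have h1 := hc (.G (m+k)) (.G (n-k))
      simp only [T_apply, cf, pre] at h1
      rw [show m+k-2*(-1)-1-2*0-1 = m+k by ring, show n-k-2*(-1)-1-2*0-1 = n-k by ring,
        show m+k-2*(-1)-1 = m+(k+1) by ring, show n-k-2*0-1 = n-(k+1) by ring,
        show m+k-2*0-1 = m+(k-1) by ring, show n-k-2*(-1)-1 = n-(k-1) by ring] at h1
      linear_combination -h1) 0
    simpa using this
  ext ⟨p, q⟩
  rcases p with m|m|m <;> rcases q with n|n|n <;>
    first
    | exact hLL _ _ | exact hLT _ _ | exact hTL _ _ | exact hTT _ _ | exact hGG _ _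
    | exact coef_zero_of_parity hv _ _ (by simp only [par]; decide)

theorem odd_case (d : Lsa →ₗ[ℂ] V) (hd : IsDerOfParity 1 d) :
    ∃ a : V, IsParityV 1 a ∧ d = innMap 1 a := by
  obtain ⟨b, hb, hb'⟩ := T0_surj (d (e (.T 0))) (by simpa [par] using hd.1 (.T 0))
  apply inner_of_sub b hb
  have hd2 := der_sub hd (innMap_der 1 b hb)
  have hT0 : (d - innMap 1 b) (e (.T 0)) = 0 := by
    rw [LinearMap.sub_apply, innMap_e, hb']; simp [par, sgn_zero]
  generalize d - innMap 1 b = D at hd2 hT0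
  apply inner_zero
  have hT : ∀ k, D (e (.T k)) = 0 := by
    intro k
    apply T0_inj _ (by simpa [par] using hd2.1 (.T k))
    have := hd2.2 (.T 0) (.T k)
    simpa [act2_e, hT0, bk_TT, par, sgn_zero] using this.symm
  have hL : ∀ k, D (e (.L k)) = 0 := by
    intro k
    apply T0_inj _ (by simpa [par] using hd2.1 (.L k))
    have := hd2.2 (.T 0) (.L k)
    simpa [act2_e, hT0, bk_TL, par, sgn_zero, hT] using this.symm
  have hG : ∀ k, D (e (.G k)) = 0 := by
    intro k
    apply TT_inj _ (by have := hd2.1 (.G k); rwa [show par (.G k) + 1 = 0 from by simp only [par]; decide] at this)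
    have h1 := hd2.2 (.T 0) (.G k)
    have h2 := hd2.2 (.T (-1)) (.G (k+1))
    rw [bk_TG, show k + 2*0 + 1 = k+1 by ring, act2_e, act2_e, hT] at h1
    rw [bk_TG, show k + 1 + 2*(-1) + 1 = k by ring, act2_e, act2_e, hT, h1] at h2
    simpa [par, sgn_zero] using h2.symm
  rintro (k|k|k)
  exacts [hL k, hT k, hG k]

/-! ### The even case: normalisation -/

/-- contraction for `ad G_0` -/
def kk : Idx → Lsa
  | .L m => if m = 0 then (1/2:ℂ) • e (.G 0) else (1/4:ℂ) • e (.G (2*m))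
  | .T k => (1/(2*(k:ℂ)+1)) • e (.G (2*k+1))
  | .G n => if n % 2 = 0 then (if n = 0 then 0 else (-(2/(n:ℂ))) • e (.L (n/2)))
      else (-1/2:ℂ) • e (.T ((n-1)/2))

theorem kk_G_even (m : ℤ) (hm : m ≠ 0) : kk (.G (2*m)) = (-(1/(m:ℂ))) • e (.L m) := by
  have h1 : (2*m) % 2 = 0 := by omega
  have h2 : (2*m) / 2 = m := by omega
  have h3 : ¬ (2*m = 0) := by omega
  have h4 : (m:ℂ) ≠ 0 := by exact_mod_cast hm
  simp only [kk, h1, h2, h3, if_true, if_false]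
  congr 1; push_cast; field_simp

theorem kk_G_zero : kk (.G 0) = 0 := by simp [kk]

theorem kk_G_odd (m : ℤ) : kk (.G (2*m+1)) = (-1/2:ℂ) • e (.T m) := by
  have h1 : ¬ (2*m+1) % 2 = 0 := by omega
  have h2 : (2*m+1-1) / 2 = m := by omega
  simp only [kk, h1, h2, if_false]

def hL : Lsa →ₗ[ℂ] Lsa := Finsupp.linearCombination ℂ kk

theorem hL_e (a : Idx) : hL (e a) = kk a := by simp [hL, e]

theorem odd_ne (k : ℤ) : 2*(k:ℂ)+1 ≠ 0 := by
  have : (2*k+1 : ℤ) ≠ 0 := by omega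
  exact_mod_cast this

theorem bk_G0_G_even (m : ℤ) : bk (.G 0) (.G (2*m)) = (2:ℂ) • e (.L m) := by
  have := bk_even_even 0 m
  simpa using this

theorem bk_G0_G_odd (m : ℤ) : bk (.G 0) (.G (2*m+1)) = ((m:ℂ)+1/2) • e (.T m) := by
  have := bk_even_odd 0 m
  rw [mul_zero] at this
  rw [this, zero_add]; congr 1; push_cast; ring

theorem hL_contr (a : Idx) : ad (.G 0) (kk a) + hL (bk (.G 0) a) = e a := by
  rcases a with m|m|m
  · by_cases hm : m = 0
    · subst hm
      have := bk_G0_G_even 0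
      rw [mul_zero] at this
      simp [kk, bk_GL, ad_e, this]
    · have h4 : (m:ℂ) ≠ 0 := by exact_mod_cast hm
      have hk : kk (.L m) = (1/4:ℂ) • e (.G (2*m)) := by simp only [kk, hm, if_false]
      rw [hk]
      simp only [map_smul, ad_e, bk_G0_G_even, bk_GL, zero_add, hL_e, kk_G_even m hm,
        smul_smul, ← add_smul]
      rw [show (1/4*2 + -((m:ℂ)-((0:ℤ):ℂ))/2 * -(1/(m:ℂ)) : ℂ) = 1 by
        push_cast; field_simp; ring, one_smul]
  · have h4 := odd_ne m
    have hk : kk (.T m) = (1/(2*(m:ℂ)+1)) • e (.G (2*m+1)) := rfl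
    rw [hk]
    simp only [map_smul, map_neg, ad_e, bk_G0_G_odd, bk_GT, zero_add, hL_e, kk_G_odd,
      smul_smul, ← add_smul, ← neg_smul]
    rw [show (1/(2*(m:ℂ)+1)*((m:ℂ)+1/2) + -(-1/2) : ℂ) = 1 by
        field_simp; ring, one_smul]
  · rcases Int.even_or_odd' m with ⟨u, rfl|rfl⟩
    · by_cases hm : u = 0
      · subst hm
        have := bk_G0_G_even 0
        rw [mul_zero] at this
        rw [mul_zero, kk_G_zero, this, map_smul, hL_e]
        simp [kk]
      · have h4 : (u:ℂ) ≠ 0 := by exact_mod_cast hm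
        rw [kk_G_even u hm, bk_G0_G_even]
        simp only [map_smul, ad_e, bk_GL, hL_e, kk, hm, if_false, zero_add, smul_smul, ← add_smul]
        rw [show (-(1/(u:ℂ)) * (-((u:ℂ)-((0:ℤ):ℂ))/2) + 2*(1/4) : ℂ) = 1 by
          push_cast; field_simp; ring, one_smul]
    · have h4 := odd_ne u
      rw [kk_G_odd, bk_G0_G_odd]
      simp only [map_smul, ad_e, bk_GT, hL_e, kk, zero_add, smul_smul, smul_neg, ← neg_smul, ← add_smul]
      rw [show (-(-1/2) + ((u:ℂ)+1/2)*(1/(2*(u:ℂ)+1)) : ℂ) = 1 by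
        field_simp; ring, one_smul]

theorem kk_form (a : Idx) : ∃ (c : ℂ) (b : Idx), kk a = c • e b ∧ par b = 1 + par a := by
  rcases a with m|m|m
  · simp only [kk]; split_ifs
    · exact ⟨_, _, rfl, by simp [par]⟩
    · exact ⟨_, _, rfl, by simp [par]⟩
  · exact ⟨_, _, rfl, by simp [par]⟩
  · simp only [kk]; split_ifs
    · exact ⟨0, .L 0, by simp, by simp only [par]; decide⟩
    · exact ⟨_, _, rfl, by simp only [par]; decide⟩
    · exact ⟨_, _, rfl, by simp only [par]; decide⟩

def hV : V →ₗ[ℂ] V := Finsupp.linearCombination ℂ (fun p : Idx × Idx => tens (kk p.1) (e p.2))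

theorem hV_single (a b : Idx) : hV (Finsupp.single (a,b) 1) = tens (kk a) (e b) := by simp [hV]

theorem hV_tens (x y : Lsa) : hV (tens x y) = tens (hL x) y := by
  have : tens.compr₂ hV = tens.comp hL := by
    apply e_ext; intro a; apply e_ext; intro b
    simp [tens_e_e, hV_single, hL_e]
  exact congrArg (fun f => f x y) this

theorem hV_contr (v : V) : act (.G 0) (hV v) + hV (act (.G 0) v) = v := by
  have : act (.G 0) ∘ₗ hV + hV ∘ₗ act (.G 0) = LinearMap.id := by
    apply v_ext
    intro a b
    obtain ⟨c, x, hx, hp⟩ := kk_form a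
    have hs : sg (.G 0) (kk a) = -(sgn (par a)) • kk a := by
      rw [hx, map_smul, sg_e, hp, mul_add, sgn_add]
      simp only [par, one_mul, sgn_one]
      module
    simp only [LinearMap.add_apply, LinearMap.comp_apply, LinearMap.id_apply, hV_tens, act_tens,
      map_add, hL_e, ad_e, sg_e, map_smul, LinearMap.smul_apply, hs]
    conv_rhs => rw [← hL_contr a]
    simp only [map_add, LinearMap.add_apply, par, one_mul]
    module
  exact LinearMap.congr_fun this v

theorem hV_parity (v : V) (hv : IsParityV 1 v) : IsParityV 0 (hV v) := by
  refine parity_induction (P := fun v => IsParityV 0 (hV v)) ?_ ?_ ?_ v hv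
  · rw [map_zero]; exact zero_parity 0
  · intro u v hu hv; rw [map_add]; exact add_parity hu hv
  · intro a b c hab
    have h1 : Finsupp.single (a,b) c = c • (Finsupp.single (a,b) 1 : V) := by simp
    obtain ⟨c', x, hx, hp⟩ := kk_form a
    rw [h1, map_smul, hV_single, hx, map_smul, LinearMap.smul_apply, tens_e_e]
    apply smul_parity; apply smul_parity
    have h2 := single_parity (x,b) 1
    simp only [hp] at h2
    rwa [add_assoc, hab, show (1+1 : ZMod 2) = 0 by decide] at h2

theorem cf_L0 (p : Idx) : cf (.L 0) p = -(dg p : ℂ)/2 := by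
  rcases p with m|m|m <;> simp only [cf, dg] <;> push_cast <;> ring

theorem pre_L0 (p : Idx) : pre (.L 0) p = p := by
  rcases p with m|m|m <;> simp [pre]

theorem L0_apply (v : V) (p q : Idx) :
    act (.L 0) v (p,q) = -((dg p + dg q : ℤ) : ℂ)/2 * v (p,q) := by
  rw [act_apply, cf_L0, cf_L0, pre_L0, pre_L0]
  simp only [par, zero_mul, sgn_zero]; push_cast; ring

theorem bk_L0 (i : Idx) : bk (.L 0) i = (-(dg i : ℂ)/2) • e i := by
  rcases i with m|m|m <;> simp only [bk, dg] <;> push_cast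
  · rw [zero_add]; congr 1; ring
  · rw [add_zero]; congr 1; ring
  · rw [add_zero]; congr 1; ring

theorem der0 {d : Lsa →ₗ[ℂ] V} (hd : IsDerOfParity 0 d) (i j : Idx) :
    d (bk i j) = act i (d (e j)) - sgn (par j * par i) • act j (d (e i)) := by
  have := hd.2 i j
  simpa [act2_e, sgn_zero] using this

theorem der_graded {d : Lsa →ₗ[ℂ] V} (hd : IsDerOfParity 0 d) (h0 : HasDg 0 (d (e (.L 0))))
    (i : Idx) : HasDg (dg i) (d (e i)) ∧ act i (d (e (.L 0))) = 0 := by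
  have h1 := der0 hd (.L 0) i
  rw [bk_L0, map_smul] at h1
  have h2 := act_dg i 0 _ h0
  have h3 : ∀ p q, (-(dg i : ℂ)/2) * d (e i) (p,q) = -((dg p + dg q : ℤ) : ℂ)/2 * d (e i) (p,q)
      - act i (d (e (.L 0))) (p,q) := by
    intro p q
    have := DFunLike.congr_fun h1 (p,q)
    rw [← L0_apply]
    simpa [par, sgn_zero] using this
  constructor
  · intro p q hpq
    by_contra hc
    have h4 : act i (d (e (.L 0))) (p,q) = 0 := by
      by_contra h5
      have := h2 p q h5
      omega
    have h5 := h3 p q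
    rw [h4] at h5
    have h6 : ((dg p + dg q - dg i : ℤ) : ℂ) * d (e i) (p,q) = 0 := by
      push_cast at h5 ⊢; linear_combination 2 * h5
    rcases mul_eq_zero.1 h6 with h7 | h7
    · have : dg p + dg q - dg i = 0 := by exact_mod_cast h7
      omega
    · exact hpq h7
  · ext ⟨p, q⟩
    by_contra hc
    have h4 := h2 p q hc
    have h5 := h3 p q
    rw [h4] at h5
    apply hc
    push_cast at h5 ⊢
    simp only [Finsupp.coe_zero, Pi.zero_apply]
    linear_combination h5

theorem inv_zero (u : V) (hu : IsParityV 0 u) (hg : HasDg 0 u) (hT : act (.T 0) u = 0)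
    (hG : act (.G 0) u = 0) : u = 0 := by
  have hc : ∀ p q, act (.T 0) u (p,q) = 0 := by intro p q; rw [hT]; rfl
  have hd : ∀ p q, act (.G 0) u (p,q) = 0 := by intro p q; rw [hG]; rfl
  have hLL : ∀ m n, u (.L m, .L n) = 0 := by
    intro m n
    have := hc (.T m) (.L n)
    simpa [T_apply, cf, pre] using this
  have hGG : ∀ m n, u (.G m, .G n) = 0 := by
    intro m n
    have hinj : Function.Injective (fun k : ℤ => ((Idx.G (m+k), Idx.G (n-k)) : Idx × Idx)) := by
      intro a b hab; simp at hab; omega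
    obtain ⟨⟨N, hN⟩, _⟩ := fin_line u _ hinj
    have := rec2_zero (fun k => u (.G (m+k), .G (n-k))) N hN (-1) 0 (by
      intro k
      have h1 := hc (.G (m+k+1)) (.G (n-k))
      simp only [T_apply, cf, pre] at h1
      rw [show m+k+1-2*0-1 = m+k by ring, show n-k-2*0-1 = n-(k+1) by ring,
        show m+k+1 = m+(k+1) by ring] at h1
      linear_combination h1) 0
    simpa using this
  have hTT : ∀ m n, u (.T m, .T n) = 0 := by
    intro m n
    have h1 := hd (.G (2*m+1)) (.T n)
    have h2 : ¬ (2*m+1-0)%2 = 0 := by omega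
    have h3 : (2*m+1-0-1)/2 = m := by omega
    rw [act_apply] at h1
    simp only [cf, pre, hGG, h2, h3, if_false] at h1
    simpa using h1
  ext ⟨p, q⟩
  rcases p with m|m|m <;> rcases q with n|n|n <;>
    first
    | exact hLL _ _ | exact hTT _ _ | exact hGG _ _
    | exact coef_zero_of_parity hu _ _ (by simp only [par]; decide)
    | (by_contra hne
       have := hg _ _ hne
       simp only [dg] at this
       omega)

/-- Step 1: make `d L_0 = 0`. -/
theorem step1 (d : Lsa →ₗ[ℂ] V) (hd : IsDerOfParity 0 d) :
    ∃ b : V, IsParityV 0 b ∧ (d - innMap 0 b) (e (.L 0)) = 0 := by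
  set u := d (e (.L 0)) with hu
  have hup : IsParityV 0 u := by simpa [par] using hd.1 (.L 0)
  let b : V := Finsupp.onFinset u.support
    (fun p => -(2 * u p / ((dg p.1 + dg p.2 : ℤ) : ℂ))) (by
      intro p hp; rw [Finsupp.mem_support_iff]; intro h; apply hp; simp [h])
  have hb : IsParityV 0 b := by
    intro p hp; exact hup p (Finsupp.support_onFinset_subset hp)
  have hba : ∀ p, b p = -(2 * u p / ((dg p.1 + dg p.2 : ℤ) : ℂ)) := fun p => rfl
  refine ⟨b, hb, ?_⟩
  have hd2 := der_sub hd (innMap_der 0 b hb)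
  have hdg : HasDg 0 ((d - innMap 0 b) (e (.L 0))) := by
    intro p q hpq
    by_contra hc
    apply hpq
    have h5 : ((dg p + dg q : ℤ) : ℂ) ≠ 0 := by exact_mod_cast hc
    rw [LinearMap.sub_apply, innMap_e, Finsupp.sub_apply, Finsupp.smul_apply, L0_apply, hba]
    simp only [zero_mul, sgn_zero, one_smul]
    rw [← hu]
    field_simp
    ring
  generalize d - innMap 0 b = D at hd2 hdg
  have h := der_graded hd2 hdg
  exact inv_zero _ (by simpa [par] using hd2.1 (.L 0)) hdg (h _).2 (h _).2

theorem G0_sq (v : V) : act (.G 0) (act (.G 0) v) = act (.L 0) v := by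
  have h := actx_bk (.G 0) (.G 0) v
  have h2 := bk_G0_G_even 0
  rw [mul_zero] at h2
  rw [h2, map_smul, actx_e, LinearMap.smul_apply] at h
  simp only [par, mul_one, sgn_one] at h
  have h3 : (2:ℂ) • act (.L 0) v = (2:ℂ) • act (.G 0) (act (.G 0) v) := by rw [h]; module
  exact (smul_right_injective V (two_ne_zero : (2:ℂ) ≠ 0) h3).symm

theorem L0_of_G0 {d : Lsa →ₗ[ℂ] V} (hd : IsDerOfParity 0 d) :
    d (e (.L 0)) = act (.G 0) (d (e (.G 0))) := by
  have h := der0 hd (.G 0) (.G 0)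
  have h2 := bk_G0_G_even 0
  rw [mul_zero] at h2
  rw [h2, map_smul] at h
  simp only [par, mul_one, sgn_one] at h
  have h3 : (2:ℂ) • d (e (.L 0)) = (2:ℂ) • act (.G 0) (d (e (.G 0))) := by rw [h]; module
  exact smul_right_injective V (two_ne_zero : (2:ℂ) ≠ 0) h3

/-- Step 2: make `d G_0 = 0`. -/
theorem step2 (d : Lsa →ₗ[ℂ] V) (hd : IsDerOfParity 0 d) (h0 : d (e (.L 0)) = 0) :
    ∃ b : V, IsParityV 0 b ∧ (d - innMap 0 b) (e (.G 0)) = 0 := by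
  refine ⟨hV (d (e (.G 0))), hV_parity _ (by simpa [par] using hd.1 (.G 0)), ?_⟩
  have h1 := hV_contr (d (e (.G 0)))
  rw [← L0_of_G0 hd, h0, map_zero, add_zero] at h1
  rw [LinearMap.sub_apply, innMap_e, h1]
  simp [sgn_zero]

/-! ### The even case: the rigidity step -/

theorem T_GG (v : V) (k a b a1 b1 : ℤ) (ha : a = a1+2*k+1) (hb : b = b1+2*k+1) :
    act (.T k) v (.G a, .G b) = v (.G a1, .G b) + v (.G a, .G b1) := by
  rw [T_apply]
  simp only [cf, pre]
  rw [show a-2*k-1 = a1 by omega, show b-2*k-1 = b1 by omega]; ring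

theorem T_TT (v : V) (k a b a1 b1 : ℤ) (ha : a = a1+k) (hb : b = b1+k) :
    act (.T k) v (.T a, .T b) = ((k:ℂ)+1/2) * (v (.L a1, .T b) + v (.T a, .L b1)) := by
  rw [T_apply]
  simp only [cf, pre]
  rw [show a-k = a1 by omega, show b-k = b1 by omega]; ring

theorem T_LG (v : V) (k m b b1 : ℤ) (hb : b = b1+2*k+1) :
    act (.T k) v (.L m, .G b) = v (.L m, .G b1) := by
  rw [T_apply]
  simp only [cf, pre]
  rw [show b-2*k-1 = b1 by omega]; ring

theorem T_GL (v : V) (k m b b1 : ℤ) (hb : b = b1+2*k+1) :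
    act (.T k) v (.G b, .L m) = v (.G b1, .L m) := by
  rw [T_apply]
  simp only [cf, pre]
  rw [show b-2*k-1 = b1 by omega]; ring

theorem T_LT (v : V) (k m j j1 : ℤ) (hb : j = j1+k) :
    act (.T k) v (.L m, .T j) = ((k:ℂ)+1/2) * v (.L m, .L j1) := by
  rw [T_apply]
  simp only [cf, pre]
  rw [show j-k = j1 by omega]; ring

theorem T_GT (v : V) (k a j a1 j1 : ℤ) (ha : a = a1+2*k+1) (hb : j = j1+k) :
    act (.T k) v (.G a, .T j) = v (.G a1, .T j) + ((k:ℂ)+1/2) * v (.G a, .L j1) := by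
  rw [T_apply]
  simp only [cf, pre]
  rw [show a-2*k-1 = a1 by omega, show j-k = j1 by omega]; ring

theorem pre_GG_odd (n a k : ℤ) (h : a = n+2*k+1) : pre (.G n) (.G a) = .T k := by
  have h1 : ¬ (a-n)%2 = 0 := by omega
  have h2 : (a-n-1)/2 = k := by omega
  simp only [pre, h1, h2, if_false]

theorem pre_GG_even (n a k : ℤ) (h : a = n+2*k) : pre (.G n) (.G a) = .L k := by
  have h1 : (a-n)%2 = 0 := by omega
  have h2 : (a-n)/2 = k := by omega
  simp only [pre, h1, h2, if_true]

theorem cf_GG_odd (n a k : ℤ) (h : a = n+2*k+1) : cf (.G n) (.G a) = -1 := by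
  have h1 : ¬ (a-n)%2 = 0 := by omega
  simp only [cf, h1, if_false]

theorem cf_GG_even (n a k : ℤ) (h : a = n+2*k) : cf (.G n) (.G a) = -((k:ℂ)-n)/2 := by
  have h1 : (a-n)%2 = 0 := by omega
  simp only [cf, h1, if_true]
  subst h; push_cast; ring

theorem G_apply (n : ℤ) (v : V) (p q : Idx) :
    act (.G n) v (p,q) = cf (.G n) p * v (pre (.G n) p, q)
      + sgn (par p) * (cf (.G n) q * v (p, pre (.G n) q)) := by
  rw [act_apply]; simp only [par, one_mul]

theorem G_LG (v : V) (n m b k a : ℤ) (hb : b = n+2*k+1) (ha : a = 2*m-n) :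
    act (.G n) v (.L m, .G b) = cf (.G n) (.L m) * v (.G a, .G b) - v (.L m, .T k) := by
  rw [G_apply, pre_GG_odd n b k hb, cf_GG_odd n b k hb, show pre (.G n) (.L m) = .G a by rw [ha]; rfl]
  simp only [par, sgn_zero]; ring

theorem G_GL (v : V) (n m a k b : ℤ) (ha : a = n+2*k+1) (hb : b = 2*m-n) :
    act (.G n) v (.G a, .L m) = -v (.T k, .L m) - cf (.G n) (.L m) * v (.G a, .G b) := by
  rw [G_apply, pre_GG_odd n a k ha, cf_GG_odd n a k ha, show pre (.G n) (.L m) = .G b by rw [hb]; rfl]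
  simp only [par, sgn_one]; ring

theorem G_GT (v : V) (n j a k b : ℤ) (ha : a = n+2*k) (hb : b = 2*j+1-n) :
    act (.G n) v (.G a, .T j) = -((k:ℂ)-n)/2 * v (.L k, .T j) - cf (.G n) (.T j) * v (.G a, .G b) := by
  rw [G_apply, pre_GG_even n a k ha, cf_GG_even n a k ha, show pre (.G n) (.T j) = .G b by rw [hb]; rfl]
  simp only [par, sgn_one]; ring

theorem seq_zero (α F : ℤ → ℂ) (hlo : ∃ N, ∀ n < N, α n = 0) (hhi : ∃ N, ∀ n > N, α n = 0)
    (hF : ∀ n, n ≠ 0 → n ≠ 1 → F n = 0) (h0 : α 0 = 0)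
    (rel : ∀ k : ℤ, (k:ℂ)/2 * α k - ((k:ℂ)+1)/2 * α (k+1) + F (2*k+1) - F (2*k+2) = 0) :
    (∀ n, F n = 0) ∧ ∀ n, α n = 0 := by
  obtain ⟨N, hN⟩ := hlo
  obtain ⟨M, hM⟩ := hhi
  have up : ∀ k : ℤ, 1 ≤ k → (k:ℂ)/2 * α k = F 1 := by
    intro k hk
    induction k, hk using Int.le_induction with
    | base =>
      have := rel 0
      rw [hF (2*0+2) (by omega) (by omega), h0] at this
      norm_num at this ⊢
      linear_combination -this
    | succ k hk ih =>
      have := rel k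
      rw [hF (2*k+2) (by omega) (by omega), hF (2*k+1) (by omega) (by omega)] at this
      push_cast
      linear_combination ih - this
  have down : ∀ k : ℤ, k ≤ -1 → (k:ℂ)/2 * α k = F 0 := by
    intro k hk
    induction k, hk using Int.le_induction_down with
    | base =>
      have := rel (-1)
      rw [hF (2*(-1)+1) (by omega) (by omega)] at this
      norm_num [h0] at this ⊢
      linear_combination this
    | pred k hk ih =>
      have := rel (k-1)
      rw [hF (2*(k-1)+2) (by omega) (by omega), hF (2*(k-1)+1) (by omega) (by omega),
        sub_add_cancel] at this
      push_cast at this ⊢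
      linear_combination ih + this
  have F1 : F 1 = 0 := by
    rw [← up (max 1 (M+1)) (by omega), hM _ (by omega), mul_zero]
  have F0 : F 0 = 0 := by
    rw [← down (min (-1) (N-1)) (by omega), hN _ (by omega), mul_zero]
  constructor
  · intro n
    by_cases h : n = 0
    · rw [h, F0]
    by_cases h1 : n = 1
    · rw [h1, F1]
    exact hF n h h1
  · intro n
    by_cases h : n = 0
    · rw [h, h0]
    have hn : (n:ℂ)/2 ≠ 0 := by
      have : (n:ℂ) ≠ 0 := by exact_mod_cast h
      exact div_ne_zero this two_ne_zero
    have h2 : (n:ℂ)/2 * α n = 0 := by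
      rcases lt_or_gt_of_ne h with h3 | h3
      · rw [down n (by omega), F0]
      · rw [up n (by omega), F1]
    exact (mul_eq_zero.1 h2).resolve_left hn

theorem final_TT {D : Lsa →ₗ[ℂ] V} (hd : IsDerOfParity 0 D) (hG : D (e (.G 0)) = 0)
    (hF : ∀ n : ℤ, n ≠ 0 → n ≠ 1 → D (e (.T 0)) (.G n, .G (1-n)) = 0)
    (h0 : D (e (.T 0)) (.L 0, .T 0) = 0) :
    D (e (.T 0)) = 0 ∧ D (e (.T (-1))) = 0 := by
  have hL0 : D (e (.L 0)) = 0 := by rw [L0_of_G0 hd, hG, map_zero]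
  have hgr : ∀ i, HasDg (dg i) (D (e i)) := fun i =>
    (der_graded hd (by rw [hL0]; intro p q h; exact absurd rfl h) i).1
  have E1 := der0 hd (.T 0) (.T (-1))
  have E2 := der0 hd (.T 0) (.G 0)
  have E3 := der0 hd (.T (-1)) (.G 1)
  rw [bk_TT, map_zero] at E1
  rw [bk_TG, hG, map_zero, show (0:ℤ)+2*0+1 = 1 by norm_num] at E2
  rw [bk_TG, show (1:ℤ)+2*(-1)+1 = 0 by norm_num, hG, E2] at E3
  simp only [par, mul_zero, sgn_zero, one_smul, zero_sub, map_neg] at E1 E3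
  have p1 : IsParityV 0 (D (e (.T 0))) := by simpa [par] using hd.1 (.T 0)
  have p2 : IsParityV 0 (D (e (.T (-1)))) := by simpa [par] using hd.1 (.T (-1))
  have g1 := hgr (.T 0)
  have g2 := hgr (.T (-1))
  generalize D (e (.T 0)) = τ at *
  generalize D (e (.T (-1))) = σ at *
  have e1 : ∀ p q, act (.T 0) σ (p,q) = act (.T (-1)) τ (p,q) := by
    intro p q; rw [eq_of_sub_eq_zero E1.symm]
  have e2 : ∀ p q, act (.T (-1)) (act (.G 0) τ) (p,q) + act (.G 1) σ (p,q) = 0 := by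
    intro p q
    have := DFunLike.congr_fun E3 (p,q)
    simp only [Finsupp.coe_zero, Pi.zero_apply, Finsupp.sub_apply, Finsupp.neg_apply] at this
    linear_combination this
  have hS : ∀ a : ℤ, σ (.G a, .G (-1-a)) = τ (.G (a+1), .G (-a)) := by
    intro a
    obtain ⟨⟨N1, hN1⟩, _⟩ := fin_line σ (fun a => (.G a, .G (-1-a)))
      (by intro a b hab; simp at hab; omega)
    obtain ⟨⟨N2, hN2⟩, _⟩ := fin_line τ (fun a => (.G (a+1), .G (-a)))
      (by intro a b hab; simp at hab; omega)
    have := rec2_zero (fun a => σ (.G a, .G (-1-a)) - τ (.G (a+1), .G (-a))) (min N1 N2) (by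
      intro n hn
      rw [hN1 n (by omega), hN2 n (by omega), sub_zero]) (-1) 0 (by
      intro k
      have h := e1 (.G (k+1)) (.G (-1-k))
      rw [T_GG σ 0 (k+1) (-1-k) k (-1-(k+1)) (by omega) (by omega),
        T_GG τ (-1) (k+1) (-1-k) (k+1+1) (-k) (by omega) (by omega),
        show -1-k = -(k+1) by ring] at h
      rw [show -1-k = -(k+1) by ring]
      linear_combination h) a
    exact sub_eq_zero.1 this
  have hα' : ∀ m : ℤ, σ (.L m, .T (-m-1)) = -τ (.L m, .T (-m)) := by
    intro m
    have h := e2 (.L m) (.G (-2*m))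
    rw [T_LG _ (-1) m (-2*m) (-2*m+1) (by omega),
      G_LG τ 0 m (-2*m+1) (-m) (2*m) (by omega) (by omega),
      G_LG σ 1 m (-2*m) (-m-1) (2*m-1) (by omega) (by omega)] at h
    have h2 := hS (2*m-1)
    rw [show -1-(2*m-1) = -2*m by ring, show 2*m-1+1 = 2*m by ring,
      show -(2*m-1) = -2*m+1 by ring] at h2
    have c0 : cf (.G 0) (.L m) = 2 := by simp [cf]
    have c1 : cf (.G 1) (.L m) = -2 := by simp [cf]
    rw [h2, c0, c1] at h
    linear_combination -h
  have hβ' : ∀ m : ℤ, σ (.T (m-1), .L (-m)) = -τ (.T m, .L (-m)) := by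
    intro m
    have h := e2 (.G (2*m)) (.L (-m))
    rw [T_GL _ (-1) (-m) (2*m) (2*m+1) (by omega),
      G_GL τ 0 (-m) (2*m+1) m (-(2*m)) (by omega) (by omega),
      G_GL σ 1 (-m) (2*m) (m-1) (-1-2*m) (by omega) (by omega), hS (2*m)] at h
    have c0 : cf (.G 0) (.L (-m)) = 2 := by simp [cf]
    have c1 : cf (.G 1) (.L (-m)) = -2 := by simp [cf]
    rw [c0, c1] at h
    linear_combination -h
  have hαβ : ∀ k : ℤ, τ (.L k, .T (-k)) = τ (.T k, .L (-k)) := by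
    intro a
    obtain ⟨⟨N1, hN1⟩, _⟩ := fin_line τ (fun a => (.L a, .T (-a)))
      (by intro a b hab; simp at hab; omega)
    obtain ⟨⟨N2, hN2⟩, _⟩ := fin_line τ (fun a => (.T a, .L (-a)))
      (by intro a b hab; simp at hab; omega)
    have := rec2_zero (fun a => τ (.L a, .T (-a)) - τ (.T a, .L (-a))) (min N1 N2) (by
      intro n hn
      rw [hN1 n (by omega), hN2 n (by omega), sub_zero]) 1 0 (by
      intro k
      have h := e1 (.T k) (.T (-k-1))
      rw [T_TT σ 0 k (-k-1) k (-(k+1)) (by omega) (by omega),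
        T_TT τ (-1) k (-k-1) (k+1) (-k) (by omega) (by omega), hα'] at h
      have h2 := hβ' (k+1)
      rw [show k+1-1 = k by ring] at h2
      rw [h2, show -k-1 = -(k+1) by ring] at h
      push_cast at h
      linear_combination 2*h) a
    exact sub_eq_zero.1 this
  have hsz := seq_zero (fun k => τ (.L k, .T (-k))) (fun n => τ (.G n, .G (1-n)))
    (fin_line τ (fun a => (.L a, .T (-a))) (by intro a b hab; simp at hab; omega)).1
    (fin_line τ (fun a => (.L a, .T (-a))) (by intro a b hab; simp at hab; omega)).2
    hF (by simpa using h0) (by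
    intro k
    have h := e2 (.G (2*k+1)) (.T (-k-1))
    rw [T_GT _ (-1) (2*k+1) (-k-1) (2*k+2) (-k) (by omega) (by omega),
      G_GT τ 0 (-k-1) (2*k+2) (k+1) (1-(2*k+2)) (by omega) (by omega),
      G_GL τ 0 (-k) (2*k+1) k (1-(2*k+1)) (by omega) (by omega),
      G_GT σ 1 (-k-1) (2*k+1) k (-1-(2*k+1)) (by omega) (by omega), hS, hα', ← hαβ,
      show -(2*k+1) = 1-(2*k+2) by ring, show 2*k+1+1 = 2*k+2 by ring,
      show -k-1 = -(k+1) by ring] at h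
    have c0 : cf (.G 0) (.L (-k)) = 2 := by simp [cf]
    have c1 : cf (.G 0) (.T (-(k+1))) = -(k:ℂ)-1/2 := by simp [cf]; ring
    have c2 : cf (.G 1) (.T (-(k+1))) = (k:ℂ)+3/2 := by simp [cf]; ring
    rw [c0, c1, c2] at h
    push_cast at h
    linear_combination h)
  obtain ⟨zF, zα⟩ := hsz
  constructor
  · ext ⟨p, q⟩
    by_contra hne
    simp only [Finsupp.coe_zero, Pi.zero_apply] at hne
    have hdeg := g1 p q hne
    have hpar := p1 (p,q) (Finsupp.mem_support_iff.2 hne)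
    rcases p with m|m|m <;> rcases q with n|n|n <;> simp only [par, dg] at hdeg hpar <;>
      first
      | omega
      | exact absurd hpar (by decide)
      | skip
    · rw [show n = -m by omega] at hne; exact hne (zα m)
    · rw [show n = -m by omega, ← hαβ] at hne; exact hne (zα m)
    · rw [show n = 1-m by omega] at hne; exact hne (zF m)
  · ext ⟨p, q⟩
    by_contra hne
    simp only [Finsupp.coe_zero, Pi.zero_apply] at hne
    have hdeg := g2 p q hne
    have hpar := p2 (p,q) (Finsupp.mem_support_iff.2 hne)
    rcases p with m|m|m <;> rcases q with n|n|n <;> simp only [par, dg] at hdeg hpar <;>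
      first
      | omega
      | exact absurd hpar (by decide)
      | skip
    · rw [show n = -m-1 by omega, hα', zα] at hne; exact hne neg_zero
    · have h2 := hβ' (m+1)
      rw [show m+1-1 = m by ring, ← hαβ, zα, neg_zero] at h2
      rw [show n = -(m+1) by omega] at hne; exact hne h2
    · rw [show n = -1-m by omega, hS, show -m = 1-(m+1) by ring, zF] at hne; exact hne rfl

theorem final_zero {D : Lsa →ₗ[ℂ] V} (hd : IsDerOfParity 0 D) (hG : D (e (.G 0)) = 0)
    (hT : D (e (.T 0)) = 0) (hT1 : D (e (.T (-1))) = 0) (i : Idx) : D (e i) = 0 := by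
  have hGn : ∀ n : ℤ, D (e (.G n)) = 0 := by
    intro n
    induction n using Int.induction_on with
    | zero => exact hG
    | succ n ih =>
      have := der0 hd (.T 0) (.G n)
      rw [bk_TG, hT, ih, show (n:ℤ)+2*0+1 = n+1 by ring] at this
      simpa using this
    | pred n ih =>
      have := der0 hd (.T (-1)) (.G (-n))
      rw [bk_TG, hT1, ih, show -(n:ℤ)+2*(-1)+1 = -n-1 by ring] at this
      simpa using this
  rcases i with m|m|m
  · have := der0 hd (.G 0) (.G (2*m))
    rw [bk_G0_G_even, hGn, hG] at this
    simpa using this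
  · have := der0 hd (.G 0) (.G (2*m+1))
    rw [bk_G0_G_odd, hGn, hG] at this
    have h2 : (m:ℂ)+1/2 ≠ 0 := by
      intro h; apply odd_ne m; linear_combination 2*h
    rw [map_smul] at this
    simp only [map_zero, smul_zero, sub_zero] at this
    exact (smul_eq_zero.1 this).resolve_left h2
  · exact hGn m

theorem add_dg {n : ℤ} {u v : V} (hu : HasDg n u) (hv : HasDg n v) : HasDg n (u + v) := by
  intro p q h
  by_cases h1 : u (p,q) = 0
  · apply hv p q; intro h2; apply h; simp [h1, h2]
  · exact hu p q h1

theorem single_dg (p q : Idx) (c : ℂ) (n : ℤ) (h : dg p + dg q = n) :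
    HasDg n (Finsupp.single (p,q) c) := by
  intro a b hab
  by_cases h1 : (p,q) = (a,b)
  · obtain ⟨rfl, rfl⟩ := Prod.mk.inj h1; exact h
  · rw [Finsupp.single_apply, if_neg h1] at hab; exact absurd rfl hab

theorem solve_g (F : ℤ →₀ ℂ) :
    ∃ g : ℤ →₀ ℂ, ∀ n, n ≠ 0 → n ≠ 1 → g (n-1) + g n = F n := by
  induction F using Finsupp.induction_linear with
  | zero => exact ⟨0, by simp⟩
  | add f g hf hg =>
    obtain ⟨a, ha⟩ := hf
    obtain ⟨b, hb⟩ := hg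
    refine ⟨a + b, fun n h0 h1 => ?_⟩
    simp only [Finsupp.add_apply, ← ha n h0 h1, ← hb n h0 h1]; ring
  | single N c =>
    have up : ∀ N : ℤ, 1 ≤ N → ∀ c : ℂ, ∃ g : ℤ →₀ ℂ,
        ∀ n, n ≠ 0 → n ≠ 1 → g (n-1) + g n = Finsupp.single N c n := by
      intro N hN
      induction N, hN using Int.le_induction with
      | base =>
        intro c; refine ⟨0, fun n h0 h1 => ?_⟩
        simp [Finsupp.single_apply, Ne.symm h1]
      | succ N hN ih =>
        intro c
        obtain ⟨g, hg⟩ := ih (-c)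
        refine ⟨g + Finsupp.single N c, fun n h0 h1 => ?_⟩
        have := hg n h0 h1
        simp only [Finsupp.add_apply, Finsupp.single_apply] at this ⊢
        have h3 : (N = n - 1) ↔ (N + 1 = n) := by omega
        simp only [h3]
        split_ifs at * <;> linear_combination this
    have down : ∀ N : ℤ, N ≤ 0 → ∀ c : ℂ, ∃ g : ℤ →₀ ℂ,
        ∀ n, n ≠ 0 → n ≠ 1 → g (n-1) + g n = Finsupp.single N c n := by
      intro N hN
      induction N, hN using Int.le_induction_down with
      | base =>
        intro c; refine ⟨0, fun n h0 h1 => ?_⟩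
        simp [Finsupp.single_apply, Ne.symm h0]
      | pred N hN ih =>
        intro c
        obtain ⟨g, hg⟩ := ih (-c)
        refine ⟨g + Finsupp.single (N-1) c, fun n h0 h1 => ?_⟩
        have := hg n h0 h1
        simp only [Finsupp.add_apply, Finsupp.single_apply] at this ⊢
        have h3 : (N - 1 = n - 1) ↔ (N = n) := by omega
        simp only [h3]
        split_ifs at * <;> linear_combination this
    rcases le_or_gt N 0 with h | h
    · exact down N h c
    · exact up N (by omega) c

theorem cf_G0_ne (n : ℤ) (hn : n ≠ 0) : cf (.G 0) (.G n) ≠ 0 := by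
  rcases Int.even_or_odd' n with ⟨k, rfl|rfl⟩
  · rw [cf_GG_even 0 _ k (by omega)]
    have hk : (k:ℂ) ≠ 0 := by
      have : k ≠ 0 := by omega
      exact_mod_cast this
    simpa using hk
  · rw [cf_GG_odd 0 _ k (by omega)]; norm_num

theorem par_pre_GG (n a : ℤ) : par (pre (.G n) (.G a)) = 0 := by
  simp only [pre]; split_ifs <;> rfl

theorem solve_b (g : ℤ →₀ ℂ) : ∃ b : V, IsParityV 1 b ∧ HasDg 0 b ∧
    ∀ n, n ≠ 0 → act (.G 0) b (.G n, .G (-n)) = g n := by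
  induction g using Finsupp.induction_linear with
  | zero => exact ⟨0, zero_parity 1, fun p q h => absurd rfl h, by simp⟩
  | add f g hf hg =>
    obtain ⟨a, ha, ha1, ha2⟩ := hf
    obtain ⟨b, hb, hb1, hb2⟩ := hg
    refine ⟨a + b, add_parity ha hb, add_dg ha1 hb1, fun n hn => ?_⟩
    rw [map_add, Finsupp.add_apply, ha2 n hn, hb2 n hn]; rfl
  | single N c =>
    by_cases hN : N = 0
    · refine ⟨0, zero_parity 1, fun p q h => absurd rfl h, fun n hn => ?_⟩
      subst hN
      simp [Finsupp.single_apply, Ne.symm hn]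
    · have hw := cf_G0_ne (-N) (by omega)
      refine ⟨Finsupp.single (.G N, pre (.G 0) (.G (-N))) (-(c / cf (.G 0) (.G (-N)))), ?_, ?_, ?_⟩
      · have := single_parity (.G N, pre (.G 0) (.G (-N))) (-(c / cf (.G 0) (.G (-N))))
        simp only [par_pre_GG] at this
        simpa [par] using this
      · apply single_dg
        have := dg_pre _ _ hw
        simp only [dg] at this ⊢
        omega
      · intro n hn
        rw [G_apply]
        have h1 : ¬ (Idx.G N = pre (.G 0) (.G n)) := by
          intro h
          have := congrArg par h
          rw [par_pre_GG] at this
          simp [par] at this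
        simp only [Finsupp.single_apply, Prod.mk.injEq, h1, false_and, if_false, par, sgn_one]
        by_cases h2 : N = n
        · subst h2
          simp only [and_self, if_true]
          field_simp
          ring
        · have h3 : ¬ (Idx.G N = Idx.G n) := by simpa using h2
          simp only [h2, h3, false_and, if_false]; ring

/-- Step 3: normalise `d T_0`, keeping `d G_0 = 0`. -/
theorem step3 (d : Lsa →ₗ[ℂ] V) (hd : IsDerOfParity 0 d) (hG : d (e (.G 0)) = 0) :
    ∃ a : V, IsParityV 0 a ∧ (d - innMap 0 a) (e (.G 0)) = 0 ∧
      (∀ n : ℤ, n ≠ 0 → n ≠ 1 → (d - innMap 0 a) (e (.T 0)) (.G n, .G (1-n)) = 0) ∧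
      (d - innMap 0 a) (e (.T 0)) (.L 0, .T 0) = 0 := by
  set τ := d (e (.T 0)) with hτ
  have hinj : Function.Injective (fun n : ℤ => ((Idx.G n, Idx.G (1-n)) : Idx × Idx)) := by
    intro a b hab; simp at hab; omega
  obtain ⟨g, hg⟩ := solve_g (Finsupp.comapDomain _ τ hinj.injOn)
  simp only [Finsupp.comapDomain_apply] at hg
  obtain ⟨b, hb, hb1, hb2⟩ := solve_b g
  let μ : ℂ := (2 * τ (.L 0, .T 0) - act (.G 0) b (.L 0, .L 0)) / 2
  let s : V := Finsupp.single (.G 0, .L 0) 1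
  have hs : act (.G 0) s = (2:ℂ) • Finsupp.single (.L 0, .L 0) 1 := by
    have h2 := bk_G0_G_even 0
    rw [mul_zero] at h2
    rw [act_single, h2, bk_GL]
    simp [tens_e_e]
  have hsp : IsParityV 1 s := by
    have := single_parity (.G 0, .L 0) 1
    simpa [par] using this
  have hbp : IsParityV 1 (b + μ • s) := add_parity hb (smul_parity μ hsp)
  have hbd : HasDg 0 (b + μ • s) := by
    apply add_dg hb1
    intro p q h
    have h1 : s (p,q) ≠ 0 := by intro h1; apply h; simp [h1]
    exact single_dg (.G 0) (.L 0) 1 0 (by simp [dg]) p q h1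
  have hval : act (.G 0) (b + μ • s) = act (.G 0) b + (2*μ) • Finsupp.single (.L 0, .L 0) 1 := by
    rw [map_add, map_smul, hs, smul_smul, mul_comm μ]
  have hGG : ∀ n, n ≠ 0 → act (.G 0) (b + μ • s) (.G n, .G (-n)) = g n := by
    intro n hn
    rw [hval, Finsupp.add_apply, hb2 n hn]; simp
  have hLL : act (.G 0) (b + μ • s) (.L 0, .L 0) = 2 * τ (.L 0, .T 0) := by
    rw [hval, Finsupp.add_apply]
    simp [μ]; ring
  refine ⟨act (.G 0) (b + μ • s), ?_, ?_, ?_, ?_⟩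
  · have := act_parity (.G 0) 1 _ hbp
    rwa [show par (.G 0) + 1 = 0 from by simp only [par]; decide] at this
  · rw [LinearMap.sub_apply, hG, innMap_e, G0_sq]
    have : act (.L 0) (b + μ • s) = 0 := by
      ext ⟨p, q⟩
      rw [L0_apply]
      by_cases h : (b + μ • s) (p,q) = 0
      · rw [h, mul_zero]; rfl
      · rw [hbd p q h]; simp
    rw [this]; simp
  · intro n h0 h1
    rw [LinearMap.sub_apply, innMap_e, ← hτ, zero_mul, sgn_zero, one_smul, Finsupp.sub_apply,
      T_GG _ 0 n (1-n) (n-1) (-n) (by omega) (by omega), hGG n h0]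
    have h2 := hGG (n-1) (by omega)
    rw [show -(n-1) = 1-n by ring] at h2
    rw [h2, ← hg n h0 h1]; ring
  · rw [LinearMap.sub_apply, innMap_e, ← hτ, zero_mul, sgn_zero, one_smul, Finsupp.sub_apply,
      T_LT _ 0 0 0 0 (by omega), hLL]
    push_cast; ring

theorem even_case (d : Lsa →ₗ[ℂ] V) (hd : IsDerOfParity 0 d) :
    ∃ a : V, IsParityV 0 a ∧ d = innMap 0 a := by
  obtain ⟨b, hb, h1⟩ := step1 d hd
  apply inner_of_sub b hb
  have hd1 := der_sub hd (innMap_der 0 b hb)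
  generalize d - innMap 0 b = d1 at *
  obtain ⟨c, hc, h2⟩ := step2 d1 hd1 h1
  apply inner_of_sub c hc
  have hd2 := der_sub hd1 (innMap_der 0 c hc)
  generalize d1 - innMap 0 c = d2 at *
  obtain ⟨a, ha, h3, h4, h5⟩ := step3 d2 hd2 h2
  apply inner_of_sub a ha
  have hd3 := der_sub hd2 (innMap_der 0 a ha)
  generalize d2 - innMap 0 a = d3 at *
  obtain ⟨h6, h7⟩ := final_TT hd3 h3 h4 h5
  exact inner_zero (final_zero hd3 h3 h6 h7)

/-- Every super-derivation from `𝓛` to `V = 𝓛 ⊗ 𝓛` (of homogeneous parity `ε`)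
is inner: `Der(𝓛, V) = Inn(𝓛, V)`, i.e. `H¹(𝓛, V) = 0`. -/
theorem der_eq_inn (ε : ZMod 2) (d : Lsa →ₗ[ℂ] V) (hd : IsDerOfParity ε d) :
    ∃ a : V, IsParityV ε a ∧ d = innMap ε a := by
  have h : ∀ ε : ZMod 2, ε = 0 ∨ ε = 1 := by decide
  rcases h ε with rfl | rfl
  · exact even_case d hd
  · exact odd_case d hd

end
end N2
end

section
/- Let L be the centerless twisted N=2 superconformal algebra, V = L ⊗ L the L-module under the adjoint diagonal action, and let d₀ be a homogeneous super-derivation from L to V of degree 0 with respect to the (1/2)ℤ-grading. Then d₀(L_0) = 0. -/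
namespace N2

noncomputable section

/-- index of `[L_m, e_i]` -/
def shiftI (m : ℤ) : Idx → Idx
  | .L n => .L (m + n)
  | .T k => .T (k + m)
  | .G n => .G (n + 2*m)

/-- coefficient of `[L_m, e_i]` -/
def coefI (m : ℤ) : Idx → ℂ
  | .L n => (m : ℂ) - n
  | .T k => -((k : ℂ) + 1/2)
  | .G n => ((m : ℂ) - n) / 2

lemma bk_L (m : ℤ) (a : Idx) : bk (.L m) a = Finsupp.single (shiftI m a) (coefI m a) := by
  cases a <;> simp [bk, shiftI, coefI, e]

lemma act2_L (m : ℤ) (v : V) : act2 (e (.L m)) v = v.sum fun p c =>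
    c • (Finsupp.single (shiftI m p.1, p.2) (coefI m p.1)
      + Finsupp.single (p.1, shiftI m p.2) (coefI m p.2)) := by
  unfold act2
  rw [e, Finsupp.sum_single_index]
  · simp only [bk_L]
    refine Finsupp.sum_congr fun p _ => ?_
    rw [Finsupp.sum_single_index (by simp), Finsupp.sum_single_index (by simp)]
    simp [par, sgn]
  · simp

lemma shiftI_zero (a : Idx) : shiftI 0 a = a := by
  cases a <;> simp [shiftI]

lemma coefI_zero (a : Idx) : coefI 0 a = -(qdeg a : ℂ) := by
  cases a <;> simp [coefI, qdeg]
  ring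

lemma shiftI_inj (m : ℤ) : Function.Injective (shiftI m) := by
  intro a b h
  cases a <;> cases b <;> simp_all [shiftI]

lemma shiftI_inj_left (a : Idx) : Function.Injective (fun m => shiftI m a) := by
  intro m n h
  cases a <;> simp_all [shiftI]

lemma act2_L0 (q : ℚ) (v : V) (hv : IsDegV q v) : act2 (e (.L 0)) v = (-(q : ℂ)) • v := by
  rw [act2_L]
  conv_rhs => rw [← Finsupp.sum_single v, Finsupp.smul_sum]
  refine Finsupp.sum_congr fun p hp => ?_
  have := hv p hp
  rw [shiftI_zero, shiftI_zero, coefI_zero, coefI_zero, ← Finsupp.single_add, Finsupp.smul_single,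
    Finsupp.smul_single, ← this]
  congr 1
  push_cast
  simp only [smul_eq_mul]
  ring

lemma coefI_finite (a : Idx) : {m : ℤ | coefI m a = 0}.Finite := by
  apply Set.Subsingleton.finite
  intro m hm n hn
  cases a with
  | L k =>
    simp only [coefI, Set.mem_ofPred_eq, sub_eq_zero] at hm hn
    exact_mod_cast hm.trans hn.symm
  | T k =>
    exfalso
    simp only [coefI, Set.mem_ofPred_eq] at hm
    have h2 : ((2 * k + 1 : ℤ) : ℂ) = 0 := by push_cast; linear_combination (-2) * hm
    have h3 : 2 * k + 1 = 0 := by exact_mod_cast h2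
    omega
  | G k =>
    simp only [coefI, Set.mem_ofPred_eq] at hm hn
    have : (m : ℂ) = n := by linear_combination 2 * hm - 2 * hn
    exact_mod_cast this

lemma eq_zero_of_inv (v : V) (h : ∀ m : ℤ, act2 (e (.L m)) v = 0) : v = 0 := by
  ext ⟨a, b⟩
  by_contra hab
  have f1 : {m : ℤ | shiftI m a ∈ v.support.image Prod.fst}.Finite :=
    Set.Finite.preimage (shiftI_inj_left a).injOn (Finset.finite_toSet _)
  obtain ⟨m, hm⟩ := (f1.union (coefI_finite a)).exists_notMem
  simp only [Set.mem_union, Set.mem_ofPred_eq, not_or] at hm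
  obtain ⟨h1, h2⟩ := hm
  have h3 := DFunLike.congr_fun (h m) (shiftI m a, b)
  rw [act2_L, Finsupp.sum_apply, Finsupp.sum, Finset.sum_eq_single (a, b)] at h3
  · have hne : a ≠ shiftI m a := by
      intro h'
      apply h1
      rw [← h']
      exact Finset.mem_image.2 ⟨(a, b), Finsupp.mem_support_iff.2 hab, rfl⟩
    simp [Finsupp.single_apply, hne] at h3
    exact h3.elim hab h2
  · rintro ⟨p, q⟩ hp hpq
    have hne : p ≠ shiftI m a := by
      intro h'
      apply h1
      rw [← h']
      exact Finset.mem_image.2 ⟨(p, q), hp, rfl⟩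
    have hne2 : ¬ (p = a ∧ q = b) := by
      rintro ⟨rfl, rfl⟩; exact hpq rfl
    simp [Finsupp.single_apply, hne, (shiftI_inj m).eq_iff, hne2]
  · intro h'
    exact absurd (Finsupp.mem_support_iff.2 hab) h'

/-- A homogeneous super-derivation `d₀ : 𝓛 → V = 𝓛 ⊗ 𝓛` of degree `0` with
respect to the `(1/2)ℤ`-grading kills `L_0`: `d₀(L_0) = 0`. -/
theorem degree_zero_der_kills_L0 (ε : ZMod 2) (d : Lsa →ₗ[ℂ] V)
    (hd : IsDerOfParity ε d) (hhom : IsDegHomogDer 0 d) :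
    d (e (Idx.L 0)) = 0 := by
  apply eq_zero_of_inv
  intro m
  have h := hd.2 (.L 0) (.L m)
  have hb : bk (.L 0) (.L m) = coefI 0 (.L m) • e (.L m) := by
    rw [bk_L, shiftI_zero, e]; simp
  rw [hb, map_smul, act2_L0 _ _ (hhom (.L m)), coefI_zero, zero_add] at h
  simp only [par, sgn, mul_zero, zero_mul, if_true, one_smul] at h
  exact sub_eq_self.1 h.symm

end
end N2
end
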